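/- (Relative Karrass–Pietrowski–Solitar theorem.) Let φ : H → Out(A) be a monomorphism with H finite, and let A = A_1 ∗ ⋯ ∗ A_n ∗ B be a decomposition preserved by H, with each A_i finitely generated, nontrivial and torsion-free, and B a (possibly trivial) finitely generated free group. Let A_1, …, A_m be the minimal factors, and let Ā be the preimage of φ(H) in Aut(A). Then there is a tree T on which Ā acts without inversions with finitely many orbits of vertices and finitely many orbits of edges, with every edge stabilizer finite, together with vertices v_1, …, v_m of T lying in pairwise distinct Ā-orbits, such that for each i ≤ m: the stabilizer Stab_Ā(v_i) contains A_i, the intersection Stab_Ā(v_i) ∩ A equals A_i, and the image of Stab_Ā(v_i) under the projection Ā → H is Stab_H(i); moreover every vertex of T not in the Ā-orbit of some v_i has finite stabilizer. -/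

import Mathlib

/-! # Relative Karrass–Pietrowski–Solitar theorem (Hensel–Kielak) -/

variable (A : Type*) [Group A]

/-- The subgroup of inner automorphisms of `A`, inside `MulAut A`. -/
abbrev Inn : Subgroup (MulAut A) := (MulAut.conj (G := A)).range

instance Inn_normal : (Inn A).Normal := by
  constructor
  rintro x ⟨a, rfl⟩ f
  exact ⟨f a, by ext x; simp [mul_assoc]⟩

/-- The outer automorphism group of `A`. -/
abbrev OutG := MulAut A ⧸ Inn A

/-- The canonical projection `Aut(A) → Out(A)`. -/
abbrev toOut : MulAut A →* OutG A := QuotientGroup.mk' (Inn A)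

open scoped Pointwise

/-- First letters and lengths of reduced words, for a group that is the free product of the
subgroups `L i`. -/
structure HeadData {A ι : Type*} [Group A] (L : ι → Subgroup A) where
  /-- The first letter of the reduced word, with the index of its factor. -/
  hd : A → Option (ι × A)
  /-- The length of the reduced word. -/
  len : A → ℕ
  hd_one : hd 1 = none
  len_one : len 1 = 0
  hd_mul : ∀ i m a, m ∈ L i → m ≠ 1 → (∀ m', hd a ≠ some (i, m')) → hd (m * a) = some (i, m)
  len_mul : ∀ i m a, m ∈ L i → m ≠ 1 → (∀ m', hd a ≠ some (i, m')) → len (m * a) = len a + 1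
  exists_mul : ∀ a, a ≠ 1 → ∃ i m a', m ∈ L i ∧ m ≠ 1 ∧ (∀ m', hd a' ≠ some (i, m')) ∧ a = m * a'

open Monoid.CoprodI in
theorem HeadData.nonempty_of_bijective {A ι : Type*} [Group A] (L : ι → Subgroup A)
    (h : Function.Bijective (Monoid.CoprodI.lift (fun i => (L i).subtype))) :
    Nonempty (HeadData L) := by
  classical
  let f := MulEquiv.ofBijective _ h
  have hf : ∀ {i} (m : L i), f (of m) = m := fun m => by simp [f]
  have hf' : ∀ {i} (m : L i), f.symm (m : A) = of (M := fun i => L i) m := fun m => by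
    rw [MulEquiv.symm_apply_eq, hf]
  let w : A → Word (fun i => L i) := fun a => Word.equiv (f.symm a)
  have hw : ∀ a, f (w a).prod = a := fun a => by
    have : (w a).prod = f.symm a := Word.equiv.symm_apply_apply _
    rw [this, f.apply_symm_apply]
  have hw' : ∀ v, w (f v.prod) = v := fun v => by
    simp only [w, f.symm_apply_apply]
    exact Word.equiv.apply_symm_apply v
  let hd : A → Option (ι × A) := fun a => (w a).toList.head?.map (fun p => (p.1, (p.2 : A)))
  have hfst : ∀ a i, (∀ m', hd a ≠ some (i, m')) → (w a).fstIdx ≠ some i := by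
    intro a i ha hi
    simp only [Word.fstIdx, Option.map_eq_some_iff] at hi
    obtain ⟨⟨j, m⟩, hm, rfl⟩ := hi
    exact ha m (by simp [hd, hm])
  have key : ∀ i (m : L i) a, (m : A) ≠ 1 → ∀ ha : (∀ m', hd a ≠ some (i, m')),
      ∃ h1 h2, w (m * a) = Word.cons (M := fun i => L i) m (w a) h1 h2 := by
    intro i m a hm ha
    refine ⟨hfst a i ha, fun h => hm (by simp [h]), ?_⟩
    rw [← hw' (Word.cons (M := fun i => L i) m (w a) _ _)]
    congr 1
    rw [Word.prod_cons, map_mul, hf, hw]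
  have hw1 : w 1 = Word.empty := by
    rw [← hw' Word.empty]; simp
  refine ⟨⟨hd, fun a => (w a).toList.length, ?_, ?_, ?_, ?_, ?_⟩⟩
  · simp [hd, hw1, Word.empty]
  · simp [hw1, Word.empty]
  · intro i m a hm hm1 ha
    obtain ⟨h1, h2, h⟩ := key i ⟨m, hm⟩ a hm1 ha
    simp only [] at h
    simp [hd, h, Word.cons]
  · intro i m a hm hm1 ha
    obtain ⟨h1, h2, h⟩ := key i ⟨m, hm⟩ a hm1 ha
    simp only [] at h
    simp [h, Word.cons]
  · intro a ha
    have : ∀ v : Word (fun i => L i), v ≠ Word.empty →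
        ∃ i m v' h1 h2, v = Word.cons (i := i) m v' h1 h2 := by
      intro v
      induction v using Word.consRecOn with
      | empty => intro h; exact absurd rfl h
      | cons i m v h1 h2 _ => exact fun _ => ⟨i, m, v, h1, h2, rfl⟩
    obtain ⟨i, m, v, h1, h2, hc⟩ := this (w a) (fun h => ha (by rw [← hw a, h]; simp))
    refine ⟨i, m, f v.prod, m.2, fun h => h2 (Subtype.ext h), fun m' hm' => ?_, ?_⟩
    · simp only [hd, hw', Option.map_eq_some_iff] at hm'
      obtain ⟨p, hp, hp'⟩ := hm'
      apply h1
      simp only [Word.fstIdx, hp]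
      simpa using congrArg Prod.fst hp'
    · rw [← hw a, hc, Word.prod_cons, map_mul, hf]

namespace HeadData

variable {A ι : Type*} [Group A] {L : ι → Subgroup A} (D : HeadData L)

/-- The reduced word of `a` starts with a letter of `L i`. -/
def Starts (a : A) (i : ι) : Prop := ∃ m, D.hd a = some (i, m)

variable {D}

theorem not_starts_iff {a : A} {i : ι} : ¬ D.Starts a i ↔ ∀ m', D.hd a ≠ some (i, m') := by
  simp [Starts]

theorem Starts.unique {a : A} {i j : ι} (hi : D.Starts a i) (hj : D.Starts a j) : i = j := by
  obtain ⟨m, hm⟩ := hi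
  obtain ⟨m', hm'⟩ := hj
  simpa using congrArg (Option.map Prod.fst) (hm.symm.trans hm')

theorem starts_congr {a b : A} (h : D.hd a = D.hd b) {i : ι} : D.Starts a i ↔ D.Starts b i := by
  simp [Starts, h]

variable (D)

theorem hd_mul_of_not_starts {i : ι} {m a : A} (hm : m ∈ L i) (h1 : m ≠ 1)
    (ha : ¬ D.Starts a i) : D.hd (m * a) = some (i, m) :=
  D.hd_mul i m a hm h1 (not_starts_iff.1 ha)

theorem not_starts_one (i : ι) : ¬ D.Starts 1 i := by simp [Starts, D.hd_one]

theorem hd_of_mem {i : ι} {m : A} (hm : m ∈ L i) (h1 : m ≠ 1) : D.hd m = some (i, m) := by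
  simpa using D.hd_mul_of_not_starts hm h1 (D.not_starts_one i)

theorem starts_of_mem {i : ι} {m : A} (hm : m ∈ L i) (h1 : m ≠ 1) : D.Starts m i :=
  ⟨m, D.hd_of_mem hm h1⟩

theorem exists_starts {a : A} (ha : a ≠ 1) : ∃ i, D.Starts a i := by
  obtain ⟨i, m, a', hm, h1, h, rfl⟩ := D.exists_mul a ha
  exact ⟨i, m, D.hd_mul _ _ _ hm h1 h⟩

theorem eq_mul_of_hd {a : A} {i : ι} {m : A} (h : D.hd a = some (i, m)) :
    m ∈ L i ∧ m ≠ 1 ∧ ∃ a', ¬ D.Starts a' i ∧ a = m * a' ∧ D.len a = D.len a' + 1 := by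
  obtain ⟨j, m', a', hm, h1, ha', rfl⟩ := D.exists_mul a (by
    rintro rfl; simp [D.hd_one] at h)
  rw [D.hd_mul _ _ _ hm h1 ha'] at h
  simp only [Option.some.injEq, Prod.mk.injEq] at h
  obtain ⟨rfl, rfl⟩ := h
  exact ⟨hm, h1, a', not_starts_iff.2 ha', rfl, D.len_mul _ _ _ hm h1 ha'⟩

/-- Induction on the length of reduced words. -/
theorem induction {P : A → Prop} (one : P 1)
    (mul : ∀ i m a, m ∈ L i → m ≠ 1 → ¬ D.Starts a i → P a → P (m * a)) (a : A) : P a := by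
  induction hn : D.len a using Nat.strong_induction_on generalizing a with
  | _ n ih =>
    by_cases ha : a = 1
    · rwa [ha]
    obtain ⟨i, m, h⟩ := D.exists_starts ha
    obtain ⟨hm, h1, a', ha', rfl, hl⟩ := D.eq_mul_of_hd h
    exact mul i m a' hm h1 ha' (ih (D.len a') (by omega) a' rfl)

theorem hd_mul_right {j : ι} {y b : A} (hy : y ∉ L j) (hb : b ∈ L j) : D.hd (y * b) = D.hd y := by
  induction y using D.induction with
  | one => exact absurd (L j).one_mem hy
  | mul i m a hm h1 ha ih =>
    rw [D.hd_mul_of_not_starts hm h1 ha, mul_assoc, D.hd_mul_of_not_starts hm h1]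
    by_cases haj : a ∈ L j
    · have hij : i ≠ j := by
        rintro rfl
        exact hy (mul_mem hm haj)
      by_cases hab : a * b = 1
      · rw [hab]; exact D.not_starts_one i
      · exact fun h => hij (h.unique (D.starts_of_mem (mul_mem haj hb) hab))
    · rwa [starts_congr (ih haj)]

theorem hd_conj {j : ι} {v k : A} (hv : v ∉ L j) (hk : k ∈ L j) (h1 : k ≠ 1) :
    D.hd (v * k * v⁻¹) = D.hd v ∧ ∀ i, v * k * v⁻¹ ∉ L i := by
  induction v using D.induction with
  | one => exact absurd (L j).one_mem hv
  | mul i m a hm hm1 ha ih =>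
    have hconj : m * a * k * (m * a)⁻¹ = m * (a * k * a⁻¹ * m⁻¹) := by group
    have hq1 : a * k * a⁻¹ ≠ 1 := by rwa [Ne, conj_eq_one_iff]
    have hq : ¬ D.Starts (a * k * a⁻¹) i := by
      by_cases haj : a ∈ L j
      · rintro h
        obtain rfl := h.unique (D.starts_of_mem (mul_mem (mul_mem haj hk) (inv_mem haj)) hq1)
        exact hv (mul_mem hm haj)
      · rwa [starts_congr (ih haj).1]
    have hqi : a * k * a⁻¹ ∉ L i := fun h => hq (D.starts_of_mem h hq1)
    have hhd : D.hd (m * a * k * (m * a)⁻¹) = some (i, m) := by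
      rw [hconj, D.hd_mul_of_not_starts hm hm1]
      rwa [starts_congr (D.hd_mul_right hqi (inv_mem hm))]
    refine ⟨by rw [hhd, D.hd_mul_of_not_starts hm hm1 ha], fun i' h => ?_⟩
    have hii : i = i' := Starts.unique ⟨m, hhd⟩ (D.starts_of_mem h (by rwa [Ne, conj_eq_one_iff]))
    subst hii
    apply hqi
    have : a * k * a⁻¹ = m⁻¹ * (m * a * k * (m * a)⁻¹) * m := by group
    rw [this]
    exact mul_mem (mul_mem (inv_mem hm) h) hm

theorem hd_mul_of_no_cancel {x y : A} (hx : x ≠ 1)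
    (h : ∀ i, D.Starts x⁻¹ i → ¬ D.Starts y i) : D.hd (x * y) = D.hd x := by
  induction x using D.induction with
  | one => exact absurd rfl hx
  | mul i m a hm h1 ha ih =>
    rw [D.hd_mul_of_not_starts hm h1 ha, mul_assoc, D.hd_mul_of_not_starts hm h1]
    by_cases ha1 : a = 1
    · subst ha1
      rw [one_mul]
      apply h
      simpa using D.starts_of_mem (inv_mem hm) (inv_ne_one.2 h1)
    · have hai : a⁻¹ ∉ L i := fun h' =>
        ha (D.starts_of_mem (by simpa using inv_mem h') ha1)
      have := D.hd_mul_right hai (inv_mem hm)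
      rwa [starts_congr (ih ha1 fun j hj => h j (by rwa [mul_inv_rev, starts_congr this]))]

theorem hd_pow {a : A} {i j : ι} (hi : D.Starts a i) (hj : D.Starts a⁻¹ j) (hij : i ≠ j) (n : ℕ) :
    D.Starts (a ^ (n + 1)) i := by
  induction n with
  | zero => simpa
  | succ n ih =>
    rw [pow_succ']
    rw [starts_congr (D.hd_mul_of_no_cancel _ _)]
    · exact hi
    · rintro rfl; exact D.not_starts_one i hi
    · intro k hk hk'
      exact hij ((ih.unique hk').trans (hk.unique hj))

theorem len_mul_le {i : ι} {m : A} (hm : m ∈ L i) (a : A) : D.len (m * a) ≤ D.len a + 1 := by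
  by_cases h1 : m = 1
  · simp [h1]
  by_cases ha : D.Starts a i
  · obtain ⟨m', h⟩ := ha
    obtain ⟨hm', h1', a', ha', rfl, hl⟩ := D.eq_mul_of_hd h
    rw [← mul_assoc]
    by_cases hmm : m * m' = 1
    · rw [hmm, one_mul]; omega
    · rw [D.len_mul i _ _ (mul_mem hm hm') hmm (not_starts_iff.1 ha')]; omega
  · rw [D.len_mul i _ _ hm h1 (not_starts_iff.1 ha)]

theorem len_mul_le_add (a b : A) : D.len (a * b) ≤ D.len a + D.len b := by
  induction a using D.induction with
  | one => simp
  | mul i m a hm h1 ha ih =>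
    rw [mul_assoc, D.len_mul i m a hm h1 (not_starts_iff.1 ha)]
    have := D.len_mul_le hm (a * b)
    omega

theorem len_of_mem_le {i : ι} {m : A} (hm : m ∈ L i) : D.len m ≤ 1 := by
  simpa [D.len_one] using D.len_mul_le hm 1

theorem len_inv_le (a : A) : D.len a⁻¹ ≤ D.len a := by
  induction a using D.induction with
  | one => simp
  | mul i m a hm h1 ha ih =>
    rw [mul_inv_rev, D.len_mul i m a hm h1 (not_starts_iff.1 ha)]
    have := D.len_mul_le_add a⁻¹ m⁻¹
    have := D.len_of_mem_le (inv_mem hm)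
    omega

theorem exists_conj (a : A) (ha : a ≠ 1) :
    (∃ u i, u⁻¹ * a * u ∈ L i) ∨
      ∃ u i j, i ≠ j ∧ D.Starts (u⁻¹ * a * u) i ∧ D.Starts (u⁻¹ * a * u)⁻¹ j := by
  induction hn : D.len a using Nat.strong_induction_on generalizing a with
  | _ n ih =>
    obtain ⟨i, m, h⟩ := D.exists_starts ha
    obtain ⟨j, hj⟩ := D.exists_starts (inv_ne_one.2 ha)
    by_cases hij : i = j
    · subst hij
      obtain ⟨hm, h1, x, hx, rfl, hl⟩ := D.eq_mul_of_hd h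
      by_cases hx1 : x = 1
      · exact Or.inl ⟨1, i, by simpa [hx1] using hm⟩
      have hxi : x⁻¹ ∉ L i := fun h' => hx (D.starts_of_mem (by simpa using inv_mem h') hx1)
      rw [mul_inv_rev, starts_congr (D.hd_mul_right hxi (inv_mem hm))] at hj
      obtain ⟨m2, h2⟩ := hj
      obtain ⟨hm2, -, t, -, ht, hlt⟩ := D.eq_mul_of_hd h2
      have hxm : m⁻¹ * (m * x) * m = t⁻¹ * (m2⁻¹ * m) := by
        rw [← inv_inv x, ht]; group
      have hlen : D.len (m⁻¹ * (m * x) * m) < n := by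
        rw [hxm]
        have := D.len_mul_le_add t⁻¹ (m2⁻¹ * m)
        have := D.len_of_mem_le (mul_mem (inv_mem hm2) hm)
        have := D.len_inv_le t
        have := D.len_inv_le x
        omega
      have hne : m⁻¹ * (m * x) * m ≠ 1 := by
        simpa using (conj_eq_one_iff (a := m⁻¹) (b := m * x)).not.2 ha
      have e : ∀ u, u⁻¹ * (m⁻¹ * (m * x) * m) * u = (m * u)⁻¹ * (m * x) * (m * u) := by
        intro u; group
      rcases ih _ hlen _ hne rfl with ⟨u, k, hk⟩ | ⟨u, k, l, hkl, hk, hl⟩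
      · exact Or.inl ⟨m * u, k, by rwa [← e]⟩
      · exact Or.inr ⟨m * u, k, l, hkl, by rwa [← e], by rwa [← e]⟩
    · exact Or.inr ⟨1, i, j, hij, by simpa using ⟨m, h⟩, by simpa using hj⟩

/-- The elements whose reduced word starts with a letter from `θ`. -/
def cut (θ : Set (ι × A)) : Set A := {a | ∃ p ∈ θ, D.hd a = some p}

variable {D} in
theorem mem_cut_congr {θ : Set (ι × A)} {a b : A} (h : D.hd a = D.hd b) :
    a ∈ D.cut θ ↔ b ∈ D.cut θ := by
  simp [cut, h]

theorem mem_cut_of_mem {θ : Set (ι × A)} {i : ι} {m : A} (hm : m ∈ L i) :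
    m ∈ D.cut θ ↔ m ≠ 1 ∧ (i, m) ∈ θ := by
  by_cases h1 : m = 1
  · simp [h1, cut, D.hd_one]
  · simp [cut, D.hd_of_mem hm h1, h1]

theorem finite_cut_mul_right {θ : Set (ι × A)}
    (hθ : ∀ i, ∀ b ∈ L i, {a ∈ L i | ¬ (a ∈ D.cut θ ↔ a * b ∈ D.cut θ)}.Finite) (b : A) :
    {a | ¬ (a ∈ D.cut θ ↔ a * b ∈ D.cut θ)}.Finite := by
  induction b using D.induction with
  | one => simp
  | mul i m b hm h1 hb ih =>
    refine ((hθ i m hm).union (ih.preimage (f := (· * m)) (mul_left_injective m).injOn)).subset ?_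
    intro a ha
    by_cases hai : a ∈ L i
    · by_cases h : a ∈ D.cut θ ↔ a * m ∈ D.cut θ
      · refine Or.inr ?_
        simp only [Set.mem_preimage, Set.mem_ofPred_eq] at ha ⊢
        rwa [← h, mul_assoc]
      · exact Or.inl ⟨hai, h⟩
    · refine Or.inr ?_
      simp only [Set.mem_preimage, Set.mem_ofPred_eq] at ha ⊢
      rwa [mem_cut_congr (D.hd_mul_right hai hm), mul_assoc]

theorem finite_cut_conj {θ : Set (ι × A)} {i : ι} (hi : L i ≠ ⊥)
    (hθ : ∀ a ∈ L i, ∀ b ∈ L i, a ≠ 1 → b ≠ 1 → ((i, a) ∈ θ ↔ (i, b) ∈ θ)) :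
    {a | ¬ (a ∈ D.cut θ ↔ ∃ p ∈ L i, p ≠ 1 ∧ a * p * a⁻¹ ∈ D.cut θ)}.Finite := by
  obtain ⟨p, hp, hp1⟩ := (L i).bot_or_exists_ne_one.resolve_left hi
  refine (Set.finite_singleton (1 : A)).subset fun a ha => ?_
  by_contra h1
  apply ha
  by_cases hai : a ∈ L i
  · rw [D.mem_cut_of_mem hai]
    constructor
    · rintro ⟨_, h⟩
      refine ⟨a, hai, h1, ?_⟩
      rw [mul_inv_cancel_right]
      exact (D.mem_cut_of_mem hai).2 ⟨h1, h⟩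
    · rintro ⟨q, hq, hq1, h⟩
      have hm : a * q * a⁻¹ ∈ L i := mul_mem (mul_mem hai hq) (inv_mem hai)
      rw [D.mem_cut_of_mem hm] at h
      exact ⟨h1, (hθ _ hai _ hm h1 h.1).2 h.2⟩
  · constructor
    · exact fun h => ⟨p, hp, hp1, (mem_cut_congr (D.hd_conj hai hp hp1).1).2 h⟩
    · rintro ⟨q, hq, hq1, h⟩
      exact (mem_cut_congr (D.hd_conj hai hq hq1).1).1 h

/-- The elements whose reduced word starts with a letter of the factor with index `k`. -/
def startCut (k : ι) : Set A := D.cut {p | p.1 = k}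

theorem mem_startCut {k : ι} {a : A} : a ∈ D.startCut k ↔ D.Starts a k := by
  simp only [startCut, cut, Starts, Set.mem_ofPred_eq, Prod.exists]
  constructor
  · rintro ⟨i, m, rfl, h⟩; exact ⟨m, h⟩
  · rintro ⟨m, h⟩; exact ⟨k, m, rfl, h⟩

theorem finite_startCut_mul_right (k : ι) (b : A) :
    {a | ¬ (a ∈ D.startCut k ↔ a * b ∈ D.startCut k)}.Finite := by
  refine D.finite_cut_mul_right (fun i b hb => ?_) b
  refine (Set.toFinite {1, b⁻¹}).subset ?_
  rintro a ⟨ha, h⟩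
  rw [D.mem_cut_of_mem ha, D.mem_cut_of_mem (mul_mem ha hb)] at h
  by_contra h'
  simp only [Set.mem_insert_iff, Set.mem_singleton_iff, not_or, ← mul_eq_one_iff_eq_inv] at h'
  exact h (by simp [h'])

theorem finite_startCut_conj (k : ι) {i : ι} (hi : L i ≠ ⊥) :
    {a | ¬ (a ∈ D.startCut k ↔ ∃ p ∈ L i, p ≠ 1 ∧ a * p * a⁻¹ ∈ D.startCut k)}.Finite :=
  D.finite_cut_conj hi (by simp)

/-- The elements whose reduced word starts with a positive power of `b`, a letter in the factor
with index `k`. -/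
def posCut (k : ι) (b : A) : Set A := D.cut {p | p.1 = k ∧ ∃ n : ℕ, p.2 = b ^ (n + 1)}

theorem zpow_mem_posCut {k : ι} {b : A} (hb : Function.Injective fun z : ℤ => b ^ z)
    (hk : L k = Subgroup.zpowers b) (z : ℤ) : b ^ z ∈ D.posCut k b ↔ 0 < z := by
  rw [posCut, D.mem_cut_of_mem (i := k) (hk ▸ Subgroup.zpow_mem_zpowers b z)]
  constructor
  · rintro ⟨-, -, n, hn⟩
    have : z = (n + 1 : ℕ) := hb (by simpa only [zpow_natCast] using hn)
    omega
  · intro hz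
    obtain ⟨n, rfl⟩ : ∃ n : ℕ, z = (n + 1 : ℕ) := ⟨(z - 1).toNat, by omega⟩
    refine ⟨fun h => ?_, rfl, n, zpow_natCast _ _⟩
    have : ((n + 1 : ℕ) : ℤ) = 0 := hb (by simpa only [zpow_zero] using h)
    omega

theorem finite_posCut_mul_right {k : ι} {b : A} (hb : Function.Injective fun z : ℤ => b ^ z)
    (hk : L k = Subgroup.zpowers b) (c : A) :
    {a | ¬ (a ∈ D.posCut k b ↔ a * c ∈ D.posCut k b)}.Finite := by
  refine D.finite_cut_mul_right (fun i c hc => ?_) c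
  by_cases hik : i = k
  · subst hik
    rw [hk] at hc
    obtain ⟨r, rfl⟩ := Subgroup.mem_zpowers_iff.1 hc
    refine ((Set.finite_Icc (-|r|) |r|).image (b ^ ·)).subset ?_
    rintro a ⟨ha, h⟩
    rw [hk] at ha
    obtain ⟨z, rfl⟩ := Subgroup.mem_zpowers_iff.1 ha
    refine ⟨z, ?_, rfl⟩
    change ¬ (b ^ z ∈ D.posCut i b ↔ b ^ z * b ^ r ∈ D.posCut i b) at h
    rw [← zpow_add, D.zpow_mem_posCut hb hk, D.zpow_mem_posCut hb hk] at h
    rw [Set.mem_Icc]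
    rcases abs_cases r with h' | h' <;> omega
  · refine Set.finite_empty.subset ?_
    rintro a ⟨ha, h⟩
    rw [D.mem_cut_of_mem ha, D.mem_cut_of_mem (mul_mem ha hc)] at h
    simp [hik] at h

theorem finite_posCut_conj {k : ι} {b : A} {i : ι} (hi : L i ≠ ⊥) (hik : i ≠ k) :
    {a | ¬ (a ∈ D.posCut k b ↔ ∃ p ∈ L i, p ≠ 1 ∧ a * p * a⁻¹ ∈ D.posCut k b)}.Finite :=
  D.finite_cut_conj hi (by simp [hik])

theorem exists_not_starts_conj {i j : ι} {z : A}
    (h : L i ≠ (L j).map (MulAut.conj z).toMonoidHom) :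
    ∃ w ∈ L i, ∀ p ∈ L j, p ≠ 1 → ¬ D.Starts (w⁻¹ * (z * p * z⁻¹) * w) i := by
  by_cases hz : z ∈ L j
  · have hij : i ≠ j := by
      rintro rfl
      exact h (Subgroup.mem_normalizer_iff_map_conj_eq.1 (Subgroup.le_normalizer hz)).symm
    refine ⟨1, one_mem _, fun p hp h1 hs => hij ?_⟩
    refine hs.unique (D.starts_of_mem ?_ ?_)
    · simpa using mul_mem (mul_mem hz hp) (inv_mem hz)
    · simpa [conj_eq_one_iff] using h1
  by_cases hs : D.Starts z i
  · obtain ⟨m, hm⟩ := hs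
    obtain ⟨hmL, hm1, z', hz', rfl, -⟩ := D.eq_mul_of_hd hm
    refine ⟨m, hmL, fun p hp h1 => ?_⟩
    have : m⁻¹ * (m * z' * p * (m * z')⁻¹) * m = z' * p * z'⁻¹ := by group
    rw [this]
    by_cases hzj : z' ∈ L j
    · intro hs
      obtain rfl := hs.unique (D.starts_of_mem (mul_mem (mul_mem hzj hp) (inv_mem hzj))
        (by rwa [Ne, conj_eq_one_iff]))
      exact hz (mul_mem hmL hzj)
    · rwa [starts_congr (D.hd_conj hzj hp h1).1]
  · exact ⟨1, one_mem _, fun p hp h1 => by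
      simpa using (starts_congr (D.hd_conj hz hp h1).1).not.2 hs⟩

theorem exists_conj_ne (D : HeadData L) {k l : ι} (hkl : k ≠ l) (hk : L k ≠ ⊥) (hl : L l ≠ ⊥) {a : A}
    (ha : a ≠ 1) : ∃ b, a * b * a⁻¹ ≠ b := by
  obtain ⟨j, hj, haj⟩ : ∃ j, L j ≠ ⊥ ∧ a ∉ L j := by
    by_contra! h
    exact hkl ((D.starts_of_mem (h k hk) ha).unique (D.starts_of_mem (h l hl) ha))
  obtain ⟨b, hb, hb1⟩ := (L j).bot_or_exists_ne_one.resolve_left hj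
  exact ⟨b, fun h => (D.hd_conj haj hb hb1).2 j (h.symm ▸ hb)⟩

theorem eq_of_map_conj (D : HeadData L) {i j : ι} (hj : L j ≠ ⊥) {x : A}
    (h : L i = (L j).map (MulAut.conj x).toMonoidHom) : i = j := by
  obtain ⟨b, hb, hb1⟩ := (L j).bot_or_exists_ne_one.resolve_left hj
  have hx : x * b * x⁻¹ ∈ L i := h ▸ Subgroup.mem_map_of_mem (MulAut.conj x).toMonoidHom hb
  by_cases hxj : x ∈ L j
  · exact (D.starts_of_mem hx (by rwa [Ne, conj_eq_one_iff])).unique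
      (D.starts_of_mem (mul_mem (mul_mem hxj hb) (inv_mem hxj)) (by rwa [Ne, conj_eq_one_iff]))
  · exact absurd hx ((D.hd_conj hxj hb hb1).2 i)

end HeadData

/-- A finite family of subsets of `A`, almost invariant under right translations and compatible
with the left cosets of the `P i`, whose translates distinguish the conjugates of the `P i` from
each other and detect the elements which lie in no such conjugate. -/
structure SeparatingCuts {A κ : Type*} [Group A] (P : κ → Subgroup A) where
  /-- The members of the family. -/
  cuts : Set (Set A)
  finite : cuts.Finite
  finite_mul_right : ∀ c ∈ cuts, ∀ b, {a | ¬ (a ∈ c ↔ a * b ∈ c)}.Finite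
  finite_conj : ∀ c ∈ cuts, ∀ i,
    {a | ¬ (a ∈ c ↔ ∃ p ∈ P i, p ≠ 1 ∧ a * p * a⁻¹ ∈ c)}.Finite
  separates : ∀ i j x y, (P i).map (MulAut.conj x).toMonoidHom ≠
    (P j).map (MulAut.conj y).toMonoidHom → ∃ u, ∃ c ∈ cuts,
    ¬ ((∃ p ∈ P i, p ≠ 1 ∧ u⁻¹ * (x * p * x⁻¹) * u ∈ c) ↔
      ∃ p ∈ P j, p ≠ 1 ∧ u⁻¹ * (y * p * y⁻¹) * u ∈ c)
  conj_or_separates : ∀ a, a ≠ 1 → (∃ u i, u⁻¹ * a * u ∈ P i) ∨ ∃ u, ∃ c ∈ cuts,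
    ∀ n m : ℕ, ¬ (u⁻¹ * a ^ (n + 1) * u ∈ c ↔ u⁻¹ * (a ^ (m + 1))⁻¹ * u ∈ c)

theorem HeadData.nonempty_separatingCuts {A κ τ : Type*} [Group A] [Finite κ] [Finite τ]
    {L : κ ⊕ τ → Subgroup A} (D : HeadData L) (hL : ∀ i, L (Sum.inl i) ≠ ⊥) (b : τ → A)
    (hb : ∀ x, Function.Injective fun z : ℤ => b x ^ z)
    (hLb : ∀ x, L (Sum.inr x) = Subgroup.zpowers (b x)) :
    Nonempty (SeparatingCuts fun i => L (Sum.inl i)) := by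
  refine ⟨⟨Set.range D.startCut ∪ Set.range fun x => D.posCut (Sum.inr x) (b x),
    (Set.finite_range _).union (Set.finite_range _), ?_, ?_, ?_, ?_⟩⟩
  · rintro _ (⟨k, rfl⟩ | ⟨x, rfl⟩) c
    · exact D.finite_startCut_mul_right k c
    · exact D.finite_posCut_mul_right (hb x) (hLb x) c
  · rintro _ (⟨k, rfl⟩ | ⟨x, rfl⟩) i
    · exact D.finite_startCut_conj k (hL i)
    · exact D.finite_posCut_conj (hL i) (by simp)
  · intro i j x y h
    obtain ⟨w, hw, hs⟩ := D.exists_not_starts_conj (i := Sum.inl i) (j := Sum.inl j)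
      (z := x⁻¹ * y) (by
        intro h'
        apply h
        rw [h', Subgroup.map_map]
        congr 1
        ext
        simp [mul_assoc])
    refine ⟨x * w, _, Or.inl ⟨Sum.inl i, rfl⟩, fun hiff => ?_⟩
    obtain ⟨p, hp, hp1⟩ := (L (Sum.inl i)).bot_or_exists_ne_one.resolve_left (hL i)
    have hpw : (x * w)⁻¹ * (x * p * x⁻¹) * (x * w) = w⁻¹ * p * w := by group
    obtain ⟨q, hq, hq1, h⟩ := hiff.1 ⟨p, hp, hp1, D.mem_startCut.2 (D.starts_of_mem
      (hpw ▸ mul_mem (mul_mem (inv_mem hw) hp) hw)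
      (by simpa [hpw, mul_assoc, mul_eq_one_iff_eq_inv] using hp1))⟩
    apply hs q hq hq1
    convert D.mem_startCut.1 h using 1
    group
  · intro a ha
    have e : ∀ u (n : ℕ), u⁻¹ * a ^ n * u = (u⁻¹ * a * u) ^ n := fun u n => by
      simpa using (conj_pow (a := u⁻¹) (b := a) (i := n)).symm
    have e' : ∀ u (n : ℕ), u⁻¹ * (a ^ n)⁻¹ * u = ((u⁻¹ * a * u) ^ n)⁻¹ := fun u n => by
      rw [← e]; group
    rcases D.exists_conj a ha with ⟨u, i | x, hu⟩ | ⟨u, i, j, hij, hi, hj⟩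
    · exact Or.inl ⟨u, i, hu⟩
    · rw [hLb] at hu
      obtain ⟨z, hz⟩ := Subgroup.mem_zpowers_iff.1 hu
      have hz0 : z ≠ 0 := by
        rintro rfl
        rw [zpow_zero] at hz
        exact ha (by simpa [mul_assoc, mul_eq_one_iff_eq_inv] using hz.symm)
      refine Or.inr ⟨u, _, Or.inr ⟨x, rfl⟩, fun n m => ?_⟩
      rw [e, e', ← hz, ← zpow_natCast, ← zpow_natCast, ← zpow_mul, ← zpow_mul, ← zpow_neg,
        D.zpow_mem_posCut (hb x) (hLb x), D.zpow_mem_posCut (hb x) (hLb x)]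
      have hn : (0 : ℤ) < (n + 1 : ℕ) := by omega
      have hm : (0 : ℤ) < (m + 1 : ℕ) := by omega
      rcases lt_or_gt_of_ne hz0 with h | h
      · have := mul_neg_of_neg_of_pos h hn
        have := mul_neg_of_neg_of_pos h hm
        intro hiff; omega
      · have := mul_pos h hn
        have := mul_pos h hm
        intro hiff; omega
    · refine Or.inr ⟨u, _, Or.inl ⟨i, rfl⟩, fun n m => ?_⟩
      rw [e, e', D.mem_startCut, D.mem_startCut]
      refine fun h => hij ((h.1 (D.hd_pow hi hj hij n)).unique ?_)
      rw [← inv_pow]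
      exact D.hd_pow hj (by rwa [inv_inv]) hij.symm m

theorem finite_setOf_smul_eq_right {G α : Type*} [Group G] [MulAction G α] {a b : α}
    (h : {g : G | g • a = a}.Finite) : {g : G | g • a = b}.Finite := by
  rcases Set.eq_empty_or_nonempty {g : G | g • a = b} with h' | ⟨g, hg⟩
  · rw [h']; exact Set.finite_empty
  · refine (h.smul_set (a := g)).subset fun g' hg' => ?_
    rw [Set.mem_smul_set_iff_inv_smul_mem]
    simp only [Set.mem_ofPred_eq, smul_eq_mul, mul_smul] at *
    rw [hg', ← hg, inv_smul_smul]

/-- The edges of the directed graph `Y` which join the set `c` to its complement. -/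
def boundary {X : Type*} (Y : Set (X × X)) (c : Set X) : Set (X × X) :=
  {p | p ∈ Y ∧ ¬ (p.1 ∈ c ↔ p.2 ∈ c)}

/-- The directed graph `Y` is connected, in the sense that no proper nonempty set of vertices is
a union of components. -/
def BoundaryConnected {X : Type*} (Y : Set (X × X)) : Prop :=
  ∀ c, boundary Y c = ∅ → c = ∅ ∨ c = Set.univ

/-- A proper nonempty set of vertices with minimal boundary. -/
structure IsBond {X : Type*} (Y : Set (X × X)) (c : Set X) : Prop where
  nonempty : c.Nonempty
  ne_univ : c ≠ Set.univ
  minimal : ∀ c', boundary Y c' ⊆ boundary Y c → c' = ∅ ∨ c' = Set.univ ∨ c' = c ∨ c' = cᶜ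

/-- Membership in `c` depends only on membership in finitely many elements of `S`. -/
def Determines {X : Type*} (S : Set (Set X)) (c : Set X) : Prop :=
  ∃ F ⊆ S, F.Finite ∧ ∀ x y, (∀ e ∈ F, x ∈ e ↔ y ∈ e) → (x ∈ c ↔ y ∈ c)

/-- All four corners of `c` and `d` are nonempty. -/
def Crosses {X : Type*} (c d : Set X) : Prop :=
  (c ∩ d).Nonempty ∧ (c ∩ dᶜ).Nonempty ∧ (cᶜ ∩ d).Nonempty ∧ (cᶜ ∩ dᶜ).Nonempty

namespace Determines

variable {X : Type*} {S S' : Set (Set X)} {c d e : Set X}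

theorem of_mem (h : c ∈ S) : Determines S c :=
  ⟨{c}, by simpa, Set.finite_singleton c, by simp⟩

theorem of_forall (h : ∀ x y, x ∈ c ↔ y ∈ c) : Determines S c :=
  ⟨∅, by simp, Set.finite_empty, fun x y _ => h x y⟩

theorem mono (h : Determines S c) (hS : S ⊆ S') : Determines S' c := by
  obtain ⟨F, hF, h⟩ := h
  exact ⟨F, hF.trans hS, h⟩

theorem combine (hc : Determines S c) (hd : Determines S d)
    (h : ∀ x y, (x ∈ c ↔ y ∈ c) → (x ∈ d ↔ y ∈ d) → (x ∈ e ↔ y ∈ e)) : Determines S e := by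
  obtain ⟨F, hF, hf, hFc⟩ := hc
  obtain ⟨F', hF', hf', hFd⟩ := hd
  exact ⟨F ∪ F', Set.union_subset hF hF', hf.union hf', fun x y hxy =>
    h x y (hFc x y fun e he => hxy e (Or.inl he)) (hFd x y fun e he => hxy e (Or.inr he))⟩

theorem trans (h : Determines S c) (hS : ∀ e ∈ S, Determines S' e) : Determines S' c := by
  obtain ⟨F, hF, hf, hFc⟩ := h
  choose! F' hF' hf' hFd using hS
  refine ⟨⋃ e ∈ F, F' e, Set.iUnion₂_subset fun e he => hF' e (hF he),
    hf.biUnion fun e he => hf' e (hF he), fun x y hxy => hFc x y fun e he =>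
      hFd e (hF he) x y fun e' he' => hxy e' (Set.mem_biUnion he he')⟩

theorem iff_of_forall (h : Determines S c) {x y : X} (hxy : ∀ e ∈ S, x ∈ e ↔ y ∈ e) :
    x ∈ c ↔ y ∈ c := by
  obtain ⟨F, hF, -, hFc⟩ := h
  exact hFc x y fun e he => hxy e (hF he)

end Determines

namespace Crosses

variable {X : Type*} {c d : Set X}

theorem symm (h : Crosses c d) : Crosses d c := by
  obtain ⟨h1, h2, h3, h4⟩ := h
  exact ⟨by rwa [Set.inter_comm], by rwa [Set.inter_comm], by rwa [Set.inter_comm],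
    by rwa [Set.inter_comm]⟩

theorem compl_right (h : Crosses c d) : Crosses c dᶜ := by
  obtain ⟨h1, h2, h3, h4⟩ := h
  exact ⟨h2, by rwa [compl_compl], h4, by rwa [compl_compl]⟩

theorem compl_left (h : Crosses c d) : Crosses cᶜ d := h.symm.compl_right.symm

theorem compl_left_iff : Crosses cᶜ d ↔ Crosses c d :=
  ⟨fun h => by simpa using h.compl_left, compl_left⟩

end Crosses

section Boundary

variable {X : Type*} {Y : Set (X × X)} {c d : Set X}

theorem mem_boundary {p : X × X} : p ∈ boundary Y c ↔ p ∈ Y ∧ ¬ (p.1 ∈ c ↔ p.2 ∈ c) := Iff.rfl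

theorem boundary_compl : boundary Y cᶜ = boundary Y c := by
  ext p; simp [mem_boundary, not_iff_not]

theorem boundary_diff_singleton {e : X × X} :
    boundary (Y \ {e}) c = boundary Y c \ {e} := by
  ext p; simp only [mem_boundary, Set.mem_sdiff, Set.mem_singleton_iff]; tauto

theorem boundary_symmDiff : boundary Y (symmDiff c d) = symmDiff (boundary Y c) (boundary Y d) := by
  ext p; simp only [mem_boundary, Set.mem_symmDiff]; tauto

theorem boundary_inter_subset : boundary Y (c ∩ d) ⊆ boundary Y c ∪ boundary Y d := by
  intro p; simp only [mem_boundary, Set.mem_inter_iff, Set.mem_union]; tauto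

theorem ncard_boundary_inter_add_union (hc : (boundary Y c).Finite) (hd : (boundary Y d).Finite) :
    (boundary Y (c ∩ d)).ncard + (boundary Y (c ∪ d)).ncard ≤
      (boundary Y c).ncard + (boundary Y d).ncard := by
  have hu : boundary Y (c ∩ d) ∪ boundary Y (c ∪ d) ⊆ boundary Y c ∪ boundary Y d := by
    intro p; simp only [mem_boundary, Set.mem_inter_iff, Set.mem_union]; tauto
  have hi : boundary Y (c ∩ d) ∩ boundary Y (c ∪ d) ⊆ boundary Y c ∩ boundary Y d := by
    intro p; simp only [mem_boundary, Set.mem_inter_iff, Set.mem_union]; tauto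
  have hf := hc.union hd
  rw [← Set.ncard_union_add_ncard_inter _ _ (hf.subset (Set.subset_union_left.trans hu))
      (hf.subset (Set.subset_union_right.trans hu)), ← Set.ncard_union_add_ncard_inter _ _ hc hd]
  exact add_le_add (Set.ncard_le_ncard hu hf)
    (Set.ncard_le_ncard hi (hc.subset Set.inter_subset_left))

theorem eq_or_eq_compl_of_boundary_eq (hY : BoundaryConnected Y)
    (h : boundary Y c = boundary Y d) : c = d ∨ c = dᶜ := by
  rcases hY (symmDiff c d) (by rw [boundary_symmDiff, h, symmDiff_self]; rfl) with h | h
  · exact Or.inl (symmDiff_eq_bot.1 h)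
  · right
    ext x
    have : x ∈ symmDiff c d := h ▸ Set.mem_univ x
    simp only [Set.mem_symmDiff] at this
    simp only [Set.mem_compl_iff]
    tauto

/-- Any two vertices of a connected graph are linked by finitely many edges. -/
theorem BoundaryConnected.exists_link (hY : BoundaryConnected Y) (x y : X) :
    ∃ F : Set (X × X), F ⊆ Y ∧ F.Finite ∧
      ∀ c, ¬ (x ∈ c ↔ y ∈ c) → ∃ p ∈ F, p ∈ boundary Y c := by
  set c : Set X := {y | ∃ F : Set (X × X), F ⊆ Y ∧ F.Finite ∧
      ∀ c, ¬ (x ∈ c ↔ y ∈ c) → ∃ p ∈ F, p ∈ boundary Y c} with hc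
  have hx : x ∈ c := ⟨∅, by simp, Set.finite_empty, by simp⟩
  have step : ∀ p ∈ Y, ∀ y z : X, (p = (y, z) ∨ p = (z, y)) → y ∈ c → z ∈ c := by
    rintro p hp y z hpyz ⟨F, hF, hf, h⟩
    refine ⟨insert p F, Set.insert_subset hp hF, hf.insert p, fun c' hc' => ?_⟩
    by_cases hxy : x ∈ c' ↔ y ∈ c'
    · refine ⟨p, Set.mem_insert _ _, hp, ?_⟩
      rcases hpyz with rfl | rfl <;> simp only <;> tauto
    · obtain ⟨q, hq, h⟩ := h c' hxy
      exact ⟨q, Set.mem_insert_of_mem _ hq, h⟩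
  have : boundary Y c = ∅ := by
    rw [Set.eq_empty_iff_forall_notMem]
    rintro ⟨y, z⟩ ⟨hp, h⟩
    exact h ⟨step _ hp y z (Or.inl rfl), step _ hp z y (Or.inr rfl)⟩
  rcases hY c this with h | h
  · rw [h] at hx; exact hx.elim
  · exact (h ▸ Set.mem_univ y : y ∈ c)

theorem IsBond.compl (h : IsBond Y c) : IsBond Y cᶜ where
  nonempty := Set.nonempty_compl.2 h.ne_univ
  ne_univ := by simpa [Set.compl_univ_iff] using h.nonempty.ne_empty
  minimal c' hc' := by
    rw [boundary_compl] at hc'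
    rw [compl_compl]
    have := h.minimal c' hc'
    tauto

theorem IsBond.boundary_nonempty (hY : BoundaryConnected Y) (h : IsBond Y c) :
    (boundary Y c).Nonempty := by
  rw [Set.nonempty_iff_ne_empty]
  intro h'
  rcases hY c h' with h' | h'
  · exact h.nonempty.ne_empty h'
  · exact h.ne_univ h'

theorem BoundaryConnected.finite_setOf_isBond (k : ℕ) (hY : BoundaryConnected Y) {e : X × X} :
    {c | IsBond Y c ∧ e ∈ boundary Y c ∧ (boundary Y c).encard ≤ k}.Finite := by
  induction k generalizing Y e with
  | zero =>
    refine Set.finite_empty.subset ?_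
    rintro c ⟨-, he, hk⟩
    simp only [Nat.cast_zero, nonpos_iff_eq_zero, Set.encard_eq_zero] at hk
    rw [hk] at he
    exact he
  | succ k ih =>
    by_cases hY' : BoundaryConnected (Y \ {e})
    · obtain ⟨F, -, hf, hF⟩ := hY'.exists_link e.1 e.2
      refine (hf.biUnion fun p _ => ih hY' (e := p)).subset ?_
      rintro c ⟨hc, he, hk⟩
      obtain ⟨p, hp, hpc⟩ := hF c he.2
      refine Set.mem_biUnion hp ⟨⟨hc.nonempty, hc.ne_univ, fun c' hc' => hc.minimal c' ?_⟩,
        hpc, ?_⟩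
      · rw [boundary_diff_singleton, boundary_diff_singleton] at hc'
        intro q hq
        by_cases hqe : q = e
        · rwa [hqe]
        · exact (hc' ⟨hq, hqe⟩).1
      · rw [boundary_diff_singleton]
        rw [← Set.encard_sdiff_singleton_add_one he] at hk
        push_cast at hk
        exact (ENat.add_le_add_iff_right ENat.one_ne_top).1 hk
    · simp only [BoundaryConnected, not_forall, not_or] at hY'
      obtain ⟨c', hc', h1, h2⟩ := hY'
      refine (Set.toFinite {c', c'ᶜ}).subset ?_
      rintro c ⟨hc, he, -⟩
      rw [boundary_diff_singleton, Set.sdiff_eq_empty] at hc'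
      rcases hc.minimal c' (hc'.trans (by simpa using he)) with h | h | h | h
      · exact absurd h h1
      · exact absurd h h2
      · simp [h]
      · simp [h]

theorem BoundaryConnected.determines_of_not_isBond (hY : BoundaryConnected Y)
    (hf : (boundary Y c).Finite) (hc : ¬ IsBond Y c) :
    Determines {b | IsBond Y b ∧ boundary Y b ⊂ boundary Y c} c := by
  induction hn : (boundary Y c).ncard using Nat.strong_induction_on generalizing c with
  | _ n ih =>
    by_cases h0 : c = ∅
    · exact .of_forall (by simp [h0])
    by_cases h1 : c = Set.univ
    · exact .of_forall (by simp [h1])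
    have : ∃ c', boundary Y c' ⊆ boundary Y c ∧ c' ≠ ∅ ∧ c' ≠ Set.univ ∧ c' ≠ c ∧ c' ≠ cᶜ := by
      by_contra! h
      refine hc ⟨Set.nonempty_iff_ne_empty.2 h0, h1, fun c' hc' => ?_⟩
      have := h c' hc'
      rw [Set.nonempty_iff_ne_empty] at this
      tauto
    obtain ⟨c', hc', h0', h1', h2, h3⟩ := this
    have hs : boundary Y c' ⊂ boundary Y c := by
      refine hc'.ssubset_of_ne fun h => ?_
      have := eq_or_eq_compl_of_boundary_eq hY h
      tauto
    have hs' : boundary Y (symmDiff c c') ⊂ boundary Y c := by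
      have hne : boundary Y c' ≠ ∅ := fun h => by
        have := hY c' h
        tauto
      obtain ⟨p, hp⟩ := Set.nonempty_iff_ne_empty.2 hne
      rw [boundary_symmDiff]
      refine Set.ssubset_iff_of_subset ?_ |>.2 ⟨p, hc' hp, ?_⟩
      · intro q
        rw [Set.mem_symmDiff]
        have := @hc' q
        tauto
      · rw [Set.mem_symmDiff]
        have := @hc' p
        tauto
    have key : ∀ d, boundary Y d ⊂ boundary Y c →
        Determines {b | IsBond Y b ∧ boundary Y b ⊂ boundary Y c} d := by
      intro d hd
      by_cases hdb : IsBond Y d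
      · exact .of_mem ⟨hdb, hd⟩
      · exact (ih _ (hn ▸ Set.ncard_lt_ncard hd hf) (hf.subset hd.1) hdb rfl).mono
          fun b hb => ⟨hb.1, hb.2.trans hd⟩
    refine (key _ hs).combine (key _ hs') fun x y => ?_
    simp only [Set.mem_symmDiff]
    tauto

/-- A cut which does not cut a finite set of edges linking the boundary of a bond is nested with
that bond. -/
theorem finite_setOf_crosses (hY : BoundaryConnected Y) (k : ℕ)
    (hcf : (boundary Y c).Finite) :
    {d | (IsBond Y d ∧ (boundary Y d).encard ≤ k) ∧ Crosses c d}.Finite := by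
  set V : Set X := Prod.fst '' boundary Y c ∪ Prod.snd '' boundary Y c with hV
  have hVf : V.Finite := (hcf.image _).union (hcf.image _)
  choose F hF hf hFc using hY.exists_link
  refine (hVf.biUnion fun x _ => hVf.biUnion fun y _ => (hf x y).biUnion
    fun p _ => hY.finite_setOf_isBond k (e := p)).subset ?_
  rintro d ⟨⟨hd, hk⟩, hcd⟩
  by_cases h : ∀ x ∈ V, ∀ y ∈ V, (x ∈ d ↔ y ∈ d)
  · exfalso
    have key : ∀ d, IsBond Y d → Crosses c d → (∀ x ∈ V, x ∉ d) → False := by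
      intro d hd hcd hdV
      rcases hd.minimal (c ∩ d) (by
        rintro p ⟨hp, h⟩
        refine ⟨hp, fun hpd => h ?_⟩
        have h1 : ¬ (p.1 ∈ c ↔ p.2 ∈ c) → p.1 ∉ d ∧ p.2 ∉ d := fun hpc =>
          ⟨hdV _ (Or.inl ⟨p, ⟨hp, hpc⟩, rfl⟩), hdV _ (Or.inr ⟨p, ⟨hp, hpc⟩, rfl⟩)⟩
        simp only [Set.mem_inter_iff]
        tauto) with h | h | h | h
      · exact hcd.1.ne_empty h
      · exact hd.ne_univ (Set.univ_subset_iff.1 (h ▸ Set.inter_subset_right))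
      · obtain ⟨x, hx, hxd⟩ := hcd.2.2.1
        exact hx (h.symm ▸ hxd : x ∈ c ∩ d).1
      · obtain ⟨x, hx, hxd⟩ := hcd.1
        exact (h ▸ ⟨hx, hxd⟩ : x ∈ dᶜ) hxd
    by_cases hx : ∃ x ∈ V, x ∈ d
    · obtain ⟨x, hx, hxd⟩ := hx
      exact key dᶜ hd.compl hcd.compl_right fun y hy hyd => hyd ((h x hx y hy).1 hxd)
    · push Not at hx
      exact key d hd hcd hx
  · push Not at h
    obtain ⟨x, hx, y, hy, hxy⟩ := h
    obtain ⟨p, hp, hpd⟩ := hFc x y d (by tauto)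
    exact Set.mem_biUnion hx (Set.mem_biUnion hy (Set.mem_biUnion hp ⟨hd, hpd, hk⟩))

/-- The bonds with at most `k` boundary edges. -/
def boundedBonds (Y : Set (X × X)) (k : ℕ) : Set (Set X) :=
  {c | IsBond Y c ∧ (boundary Y c).Finite ∧ (boundary Y c).ncard ≤ k}

/-- The bonds with at most `k` boundary edges which cross `c`. -/
def crossings (Y : Set (X × X)) (k : ℕ) (c : Set X) : Set (Set X) :=
  {d | d ∈ boundedBonds Y k ∧ Crosses c d}

/-- Cuts are ordered by the number of boundary edges first, and then by the number of bonds
they cross. -/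
noncomputable def cutNorm (Y : Set (X × X)) (k : ℕ) (c : Set X) : ℕ ×ₗ ℕ :=
  toLex ((boundary Y c).ncard, (crossings Y k c).ncard)

/-- The bonds with at most `k` boundary edges of norm less than `v`. -/
def smallerBonds (Y : Set (X × X)) (k : ℕ) (v : ℕ ×ₗ ℕ) : Set (Set X) :=
  {d | d ∈ boundedBonds Y k ∧ cutNorm Y k d < v}

/-- The bonds with at most `k` boundary edges which are not determined by smaller ones. -/
def nestedCuts (Y : Set (X × X)) (k : ℕ) : Set (Set X) :=
  {c | c ∈ boundedBonds Y k ∧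
    ¬ Determines (smallerBonds Y k (cutNorm Y k c)) c}

variable {k : ℕ}

theorem compl_mem_boundedBonds (h : c ∈ boundedBonds Y k) : cᶜ ∈ boundedBonds Y k :=
  ⟨h.1.compl, by rw [boundary_compl]; exact h.2.1, by rw [boundary_compl]; exact h.2.2⟩

theorem cutNorm_compl : cutNorm Y k cᶜ = cutNorm Y k c := by
  simp [cutNorm, crossings, boundary_compl, Crosses.compl_left_iff]

theorem finite_crossings (hY : BoundaryConnected Y) (hc : (boundary Y c).Finite) :
    (crossings Y k c).Finite := by
  refine (finite_setOf_crosses hY k hc).subset ?_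
  rintro d ⟨⟨hd, hf, hk⟩, hcd⟩
  exact ⟨⟨hd, by rw [← hf.cast_ncard_eq]; exact_mod_cast hk⟩, hcd⟩

theorem ncard_crossings_inter_add_union (hY : BoundaryConnected Y) (hc : c ∈ boundedBonds Y k)
    (hd : d ∈ boundedBonds Y k) (hcd : Crosses c d) :
    (crossings Y k (c ∩ d)).ncard + (crossings Y k (c ∪ d)).ncard <
      (crossings Y k c).ncard + (crossings Y k d).ncard := by
  have hcf := finite_crossings (k := k) hY hc.2.1
  have hdf := finite_crossings (k := k) hY hd.2.1
  have hf := hcf.union hdf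
  have inter : ∀ {c d : Set X} e, Crosses c d → Crosses (c ∩ d) e → Crosses c e ∨ Crosses d e := by
    rintro c d e ⟨-, -, -, ⟨x, hxc, hxd⟩⟩ ⟨⟨y, hy, hye⟩, ⟨z, hz, hze⟩, ⟨s, hs, hse⟩, ⟨t, ht, hte⟩⟩
    have h1 : (c ∩ e).Nonempty := ⟨y, hy.1, hye⟩
    have h2 : (c ∩ eᶜ).Nonempty := ⟨z, hz.1, hze⟩
    have h1' : (d ∩ e).Nonempty := ⟨y, hy.2, hye⟩
    have h2' : (d ∩ eᶜ).Nonempty := ⟨z, hz.2, hze⟩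
    have h3 : (cᶜ ∩ e).Nonempty ∨ (dᶜ ∩ e).Nonempty := by
      by_cases hsc : s ∈ c
      · exact Or.inr ⟨s, fun h => hs ⟨hsc, h⟩, hse⟩
      · exact Or.inl ⟨s, hsc, hse⟩
    have h4 : (cᶜ ∩ eᶜ).Nonempty ∨ (dᶜ ∩ eᶜ).Nonempty := by
      by_cases htc : t ∈ c
      · exact Or.inr ⟨t, fun h => ht ⟨htc, h⟩, hte⟩
      · exact Or.inl ⟨t, htc, hte⟩
    have h5 : ((cᶜ ∩ e).Nonempty ∧ (dᶜ ∩ e).Nonempty) ∨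
        ((cᶜ ∩ eᶜ).Nonempty ∧ (dᶜ ∩ eᶜ).Nonempty) := by
      by_cases hxe : x ∈ e
      · exact Or.inl ⟨⟨x, hxc, hxe⟩, ⟨x, hxd, hxe⟩⟩
      · exact Or.inr ⟨⟨x, hxc, hxe⟩, ⟨x, hxd, hxe⟩⟩
    simp only [Crosses]
    tauto
  have union : ∀ e, Crosses (c ∪ d) e → Crosses c e ∨ Crosses d e := by
    intro e he
    rw [← Crosses.compl_left_iff, Set.compl_union] at he
    rw [← Crosses.compl_left_iff, ← Crosses.compl_left_iff (c := d)]
    exact inter e hcd.compl_left.compl_right he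
  have hu : crossings Y k (c ∩ d) ∪ crossings Y k (c ∪ d) ⊂ crossings Y k c ∪ crossings Y k d := by
    refine (Set.ssubset_iff_of_subset ?_).2 ⟨d, Or.inl ⟨hd, hcd⟩, ?_⟩
    · rintro e (⟨he, h⟩ | ⟨he, h⟩)
      · exact (inter e hcd h).imp (⟨he, ·⟩) (⟨he, ·⟩)
      · exact (union e h).imp (⟨he, ·⟩) (⟨he, ·⟩)
    · rintro (⟨-, -, ⟨x, hx, hxd⟩, -⟩ | ⟨-, -, -, ⟨x, hx, hxd⟩, -⟩)
      · exact hxd hx.2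
      · exact hx (Or.inr hxd)
  have hi : crossings Y k (c ∩ d) ∩ crossings Y k (c ∪ d) ⊆ crossings Y k c ∩ crossings Y k d := by
    rintro e ⟨⟨he, ⟨x, hx, hxe⟩, ⟨y, hy, hye⟩, -⟩, ⟨-, -, -, ⟨z, hz, hze⟩, ⟨t, ht, hte⟩⟩⟩
    exact ⟨⟨he, ⟨x, hx.1, hxe⟩, ⟨y, hy.1, hye⟩, ⟨z, fun h => hz (Or.inl h), hze⟩,
      ⟨t, fun h => ht (Or.inl h), hte⟩⟩, ⟨he, ⟨x, hx.2, hxe⟩, ⟨y, hy.2, hye⟩,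
      ⟨z, fun h => hz (Or.inr h), hze⟩, ⟨t, fun h => ht (Or.inr h), hte⟩⟩⟩
  rw [← Set.ncard_union_add_ncard_inter _ _ (hf.subset (Set.subset_union_left.trans hu.1))
      (hf.subset (Set.subset_union_right.trans hu.1)), ← Set.ncard_union_add_ncard_inter _ _ hcf hdf]
  exact add_lt_add_of_lt_of_le (Set.ncard_lt_ncard hu hf)
    (Set.ncard_le_ncard hi (hcf.subset Set.inter_subset_left))

theorem determines_of_cutNorm_lt (hY : BoundaryConnected Y) (hc : (boundary Y c).Finite)
    (hd : d ∈ boundedBonds Y k) (h : cutNorm Y k c < cutNorm Y k d) :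
    Determines (smallerBonds Y k (cutNorm Y k d)) c := by
  have hcd : (boundary Y c).ncard ≤ (boundary Y d).ncard := by
    rw [cutNorm, cutNorm, Prod.Lex.toLex_lt_toLex] at h
    simp only at h
    omega
  have hck := hcd.trans hd.2.2
  by_cases hcb : IsBond Y c
  · exact .of_mem ⟨⟨hcb, hc, hck⟩, h⟩
  · refine (hY.determines_of_not_isBond hc hcb).mono fun e ⟨he, hec⟩ => ?_
    have hlt := Set.ncard_lt_ncard hec hc
    refine ⟨⟨he, hc.subset hec.1, hlt.le.trans hck⟩, ?_⟩
    rw [cutNorm, cutNorm, Prod.Lex.toLex_lt_toLex]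
    exact Or.inl (hlt.trans_le hcd)

theorem determines_corners (hY : BoundaryConnected Y) (hc : c ∈ boundedBonds Y k)
    (hd : d ∈ boundedBonds Y k) (hcd : Crosses c d) :
    (Determines (smallerBonds Y k (cutNorm Y k c)) (c ∩ d) ∨
      Determines (smallerBonds Y k (cutNorm Y k c)) (c ∪ d)) ∨
    (Determines (smallerBonds Y k (cutNorm Y k d)) (c ∩ d) ∧
      Determines (smallerBonds Y k (cutNorm Y k d)) (c ∪ d)) := by
  have h1 := ncard_boundary_inter_add_union hc.2.1 hd.2.1
  have h2 := ncard_crossings_inter_add_union hY hc hd hcd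
  have hf1 : (boundary Y (c ∩ d)).Finite := (hc.2.1.union hd.2.1).subset boundary_inter_subset
  have hf2 : (boundary Y (c ∪ d)).Finite := (hc.2.1.union hd.2.1).subset <| by
    rw [← boundary_compl, Set.compl_union, ← boundary_compl (c := c), ← boundary_compl (c := d)]
    exact boundary_inter_subset
  have h : (cutNorm Y k (c ∩ d) < cutNorm Y k c ∨ cutNorm Y k (c ∪ d) < cutNorm Y k c) ∨
      (cutNorm Y k (c ∩ d) < cutNorm Y k d ∧ cutNorm Y k (c ∪ d) < cutNorm Y k d) := by
    simp only [cutNorm, Prod.Lex.toLex_lt_toLex]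
    omega
  exact h.imp (Or.imp (determines_of_cutNorm_lt hY hf1 hc) (determines_of_cutNorm_lt hY hf2 hc))
    (And.imp (determines_of_cutNorm_lt hY hf1 hd) (determines_of_cutNorm_lt hY hf2 hd))

theorem not_crosses_of_mem_nestedCuts (hY : BoundaryConnected Y) (hc : c ∈ nestedCuts Y k)
    (hd : d ∈ nestedCuts Y k) : ¬ Crosses c d := by
  wlog hle : cutNorm Y k c ≤ cutNorm Y k d generalizing c d
  · exact fun h => this hd hc (le_of_not_ge hle) h.symm
  intro hcd
  have h1 := determines_corners hY hc.1 hd.1 hcd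
  have h2 := determines_corners hY hc.1 (compl_mem_boundedBonds hd.1) hcd.compl_right
  rw [cutNorm_compl] at h2
  have hc' := hc.2
  have hd' := hd.2
  have hS : ∀ x, Determines (smallerBonds Y k (cutNorm Y k c)) x →
      Determines (smallerBonds Y k (cutNorm Y k d)) x := fun x hx =>
    hx.mono fun e he => ⟨he.1, he.2.trans_le hle⟩
  have e1 : ∀ T, Determines T (c ∩ d) → Determines T (c ∩ dᶜ) → Determines T c := fun T h h' =>
    h.combine h' fun x y => by grind
  have e2 : ∀ T, Determines T (c ∪ d) → Determines T (c ∪ dᶜ) → Determines T c := fun T h h' =>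
    h.combine h' fun x y => by grind
  have e3 : ∀ T, Determines T (c ∩ d) → Determines T (c ∪ dᶜ) → Determines T d := fun T h h' =>
    h.combine h' fun x y => by grind
  have e4 : ∀ T, Determines T (c ∪ d) → Determines T (c ∩ dᶜ) → Determines T d := fun T h h' =>
    h.combine h' fun x y => by grind
  rcases h1 with (h1 | h1) | ⟨h1, h1'⟩ <;> rcases h2 with (h2 | h2) | ⟨h2, h2'⟩
  · exact hc' (e1 _ h1 h2)
  · exact hd' (e3 _ (hS _ h1) (hS _ h2))
  · exact hd' (e3 _ (hS _ h1) h2')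
  · exact hd' (e4 _ (hS _ h1) (hS _ h2))
  · exact hc' (e2 _ h1 h2)
  · exact hd' (e4 _ (hS _ h1) h2)
  · exact hd' (e4 _ h1' (hS _ h2))
  · exact hd' (e3 _ h1 (hS _ h2))
  · exact hd' (e3 _ h1 h2')

theorem determines_nestedCuts_of_mem (hc : c ∈ boundedBonds Y k) :
    Determines (nestedCuts Y k) c := by
  induction hn : cutNorm Y k c using WellFoundedLT.induction generalizing c with
  | _ v ih =>
    by_cases h : c ∈ nestedCuts Y k
    · exact .of_mem h
    · have h' : Determines (smallerBonds Y k (cutNorm Y k c)) c := by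
        by_contra h'
        exact h ⟨hc, h'⟩
      exact h'.trans fun e he => ih _ (hn ▸ he.2) he.1 rfl

theorem determines_nestedCuts (hY : BoundaryConnected Y) (hf : (boundary Y c).Finite)
    (hk : (boundary Y c).ncard ≤ k) : Determines (nestedCuts Y k) c := by
  by_cases hc : IsBond Y c
  · exact determines_nestedCuts_of_mem ⟨hc, hf, hk⟩
  · exact (hY.determines_of_not_isBond hf hc).trans fun e he => determines_nestedCuts_of_mem
      ⟨he.1, hf.subset he.2.1, (Set.ncard_le_ncard he.2.1 hf).trans hk⟩

theorem compl_mem_nestedCuts (h : c ∈ nestedCuts Y k) : cᶜ ∈ nestedCuts Y k := by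
  refine ⟨compl_mem_boundedBonds h.1, fun h' => h.2 ?_⟩
  rw [cutNorm_compl] at h'
  refine h'.combine h' fun x y => ?_
  simp [not_iff_not]

theorem finite_setOf_mem_nestedCuts (hY : BoundaryConnected Y) (x y : X) :
    {c | c ∈ nestedCuts Y k ∧ ¬ (x ∈ c ↔ y ∈ c)}.Finite := by
  obtain ⟨F, -, hf, hF⟩ := hY.exists_link x y
  refine (hf.biUnion fun p _ => hY.finite_setOf_isBond k (e := p)).subset ?_
  rintro c ⟨⟨⟨hc, hcf, hk⟩, -⟩, hxy⟩
  obtain ⟨p, hp, hpc⟩ := hF c hxy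
  exact Set.mem_biUnion hp ⟨hc, hpc, by rw [← hcf.cast_ncard_eq]; exact_mod_cast hk⟩

variable {G : Type*} [Group G] [MulAction G X]

theorem boundary_smul (hG : ∀ g : G, g • Y = Y) (g : G) :
    boundary Y (g • c) = g • boundary Y c := by
  ext p
  rw [Set.mem_smul_set_iff_inv_smul_mem, mem_boundary, mem_boundary,
    ← Set.mem_smul_set_iff_inv_smul_mem, hG, Set.mem_smul_set_iff_inv_smul_mem,
    Set.mem_smul_set_iff_inv_smul_mem]
  rfl

theorem Crosses.smul (h : Crosses c d) (g : G) : Crosses (g • c) (g • d) := by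
  simpa only [Crosses, ← Set.smul_set_compl, ← Set.smul_set_inter, Set.smul_set_nonempty]

theorem IsBond.smul (hG : ∀ g : G, g • Y = Y) (h : IsBond Y c) (g : G) : IsBond Y (g • c) where
  nonempty := h.nonempty.smul_set
  ne_univ := by simpa [smul_eq_iff_eq_inv_smul] using h.ne_univ
  minimal c' hc' := by
    have := h.minimal (g⁻¹ • c') (by
      rw [boundary_smul hG]
      rwa [boundary_smul hG, Set.subset_smul_set_iff] at hc')
    simpa [inv_smul_eq_iff, Set.smul_set_compl] using this

theorem smul_mem_boundedBonds (hG : ∀ g : G, g • Y = Y) (h : c ∈ boundedBonds Y k) (g : G) :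
    g • c ∈ boundedBonds Y k :=
  ⟨h.1.smul hG g, by rw [boundary_smul hG]; exact h.2.1.smul_set, by
    rw [boundary_smul hG, Set.ncard_smul_set]; exact h.2.2⟩

theorem crossings_smul (hG : ∀ g : G, g • Y = Y) (g : G) :
    crossings Y k (g • c) = g • crossings Y k c := by
  ext d
  rw [Set.mem_smul_set_iff_inv_smul_mem]
  constructor
  · rintro ⟨h, h'⟩
    exact ⟨smul_mem_boundedBonds hG h _, by simpa using h'.smul g⁻¹⟩
  · rintro ⟨h, h'⟩
    exact ⟨by simpa using smul_mem_boundedBonds hG h g, by simpa using h'.smul g⟩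

theorem cutNorm_smul (hG : ∀ g : G, g • Y = Y) (g : G) :
    cutNorm Y k (g • c) = cutNorm Y k c := by
  rw [cutNorm, cutNorm, boundary_smul hG, crossings_smul hG, Set.ncard_smul_set,
    Set.ncard_smul_set]

theorem Determines.smul {S : Set (Set X)} (h : Determines S c) (g : G) :
    Determines (g • S) (g • c) := by
  obtain ⟨F, hF, hf, hFc⟩ := h
  refine ⟨g • F, Set.smul_set_mono hF, hf.smul_set, fun x y hxy => ?_⟩
  rw [Set.mem_smul_set_iff_inv_smul_mem, Set.mem_smul_set_iff_inv_smul_mem]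
  refine hFc _ _ fun e he => ?_
  have := hxy (g • e) (Set.smul_mem_smul_set he)
  rwa [Set.mem_smul_set_iff_inv_smul_mem, Set.mem_smul_set_iff_inv_smul_mem] at this

theorem smul_mem_nestedCuts (hG : ∀ g : G, g • Y = Y) (h : c ∈ nestedCuts Y k) (g : G) :
    g • c ∈ nestedCuts Y k := by
  refine ⟨smul_mem_boundedBonds hG h.1 g, fun h' => h.2 ?_⟩
  have := h'.smul g⁻¹
  rw [inv_smul_smul] at this
  refine this.mono fun e he => ?_
  rw [Set.mem_smul_set_iff_inv_smul_mem, inv_inv] at he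
  obtain ⟨h1, h2⟩ := he
  rw [cutNorm_smul hG, cutNorm_smul hG] at h2
  exact ⟨by simpa using smul_mem_boundedBonds hG h1 g⁻¹, h2⟩

theorem finite_setOf_smul_eq_of_mem_nestedCuts (hG : ∀ g : G, g • Y = Y) (hY : BoundaryConnected Y)
    (hst : ∀ p ∈ Y, {g : G | g • p = p}.Finite) (h : c ∈ nestedCuts Y k) :
    {g : G | g • c = c}.Finite := by
  obtain ⟨p, hp⟩ := h.1.1.boundary_nonempty hY
  refine (h.1.2.1.biUnion fun q _ =>
    finite_setOf_smul_eq_right (b := q) (hst p hp.1)).subset fun g hg => ?_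
  refine Set.mem_biUnion (x := g • p) ?_ rfl
  have := Set.smul_mem_smul_set (a := g) hp
  rwa [← boundary_smul hG, hg] at this

end Boundary

/-- A nested family of proper nonempty sets, closed under complements, any two points being
separated by only finitely many members. -/
structure IsTreeSet {X : Type*} (E : Set (Set X)) : Prop where
  nonempty : ∀ e ∈ E, e.Nonempty
  compl_mem : ∀ e ∈ E, eᶜ ∈ E
  not_crosses : ∀ c ∈ E, ∀ d ∈ E, ¬ Crosses c d
  finite_separating : ∀ x y, {e ∈ E | ¬ (x ∈ e ↔ y ∈ e)}.Finite

/-- A consistent choice of one set from each complementary pair in `E`, which differs only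
finitely from the choice of the sets containing a given point. -/
structure IsOrientation {X : Type*} (E o : Set (Set X)) : Prop where
  subset : o ⊆ E
  compl_mem_iff : ∀ e ∈ E, eᶜ ∈ o ↔ e ∉ o
  mem_of_subset : ∀ e ∈ o, ∀ f ∈ E, e ⊆ f → f ∈ o
  finite : ∀ x, {e ∈ o | x ∉ e}.Finite

/-- The orientations `o` and `insert eᶜ (o \ {e})` are the two sides of `e`. -/
structure Borders {X : Type*} (E o : Set (Set X)) (e : Set X) : Prop where
  isOrientation : IsOrientation E o
  mem : e ∈ o
  isOrientation_flip : IsOrientation E (insert eᶜ (o \ {e}))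

/-- The vertices of the tree of `E`: the orientations, and the midpoints between two orientations
which are the sides of an element of `E`. -/
def TreeVertex {X : Type*} (E : Set (Set X)) : Type _ :=
  {s : Set (Set X) // IsOrientation E s ∨ ∃ o e, Borders E o e ∧ s = o \ {e}}

/-- The tree of `E`: orientations are joined to the adjacent midpoints. -/
def treeOf {X : Type*} (E : Set (Set X)) : SimpleGraph (TreeVertex E) :=
  SimpleGraph.fromRel fun s t => ∃ e, Borders E s.1 e ∧ t.1 = s.1 \ {e}

section TreeSet

variable {X : Type*} {E o o' : Set (Set X)} {e f : Set X}

theorem IsTreeSet.nested (hE : IsTreeSet E) (he : e ∈ E) (hf : f ∈ E) :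
    e ⊆ f ∨ e ⊆ fᶜ ∨ eᶜ ⊆ f ∨ eᶜ ⊆ fᶜ := by
  have := hE.not_crosses e he f hf
  simp only [Crosses, not_and_or, Set.not_nonempty_iff_eq_empty, ← Set.disjoint_iff_inter_eq_empty,
    ← Set.subset_compl_iff_disjoint_right, compl_compl] at this
  tauto

theorem IsTreeSet.ne_compl (hE : IsTreeSet E) (he : e ∈ E) : e ≠ eᶜ := by
  obtain ⟨x, hx⟩ := hE.nonempty e he
  intro h
  exact (h ▸ hx : x ∈ eᶜ) hx

theorem IsTreeSet.isOrientation (hE : IsTreeSet E) (x : X) : IsOrientation E {e ∈ E | x ∈ e} where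
  subset := Set.sep_subset _ _
  compl_mem_iff e he := by simp [he, hE.compl_mem e he]
  mem_of_subset e he f hf hef := ⟨hf, hef he.2⟩
  finite y := (hE.finite_separating x y).subset fun e ⟨⟨he, hx⟩, hy⟩ => ⟨he, by tauto⟩

theorem IsOrientation.eq_of_subset (ho : IsOrientation E o)
    (ho' : IsOrientation E o') (h : o ⊆ o') : o = o' := by
  refine h.antisymm fun e he => ?_
  by_contra heo
  have heE := ho'.subset he
  exact (ho'.compl_mem_iff e heE).1 (h ((ho.compl_mem_iff e heE).2 heo)) he

theorem IsOrientation.borders (hE : IsTreeSet E) (ho : IsOrientation E o) (he : e ∈ o)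
    (hmin : ∀ f ∈ o, f ⊆ e → f = e) : Borders E o e where
  isOrientation := ho
  mem := he
  isOrientation_flip := by
    have heE := ho.subset he
    have hec := (ho.compl_mem_iff _ (hE.compl_mem e heE)).1 (by rwa [compl_compl])
    refine ⟨?_, ?_, ?_, ?_⟩
    · exact Set.insert_subset (hE.compl_mem e heE) (Set.sdiff_subset.trans ho.subset)
    · intro f hf
      have h1 := ho.compl_mem_iff f hf
      by_cases hfe : f = e
      · subst hfe; simp [hE.ne_compl heE]
      by_cases hfe' : f = eᶜ
      · subst hfe'; simp [hE.ne_compl heE]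
      have hfe'' : fᶜ ≠ e := fun h => hfe' (by rw [← h, compl_compl])
      simp [hfe, hfe', hfe'', h1]
    · intro g hg f hf hgf
      by_cases hfe' : f = eᶜ
      · exact Or.inl hfe'
      refine Or.inr ?_
      rcases hg with rfl | ⟨hg, hge⟩
      · have hfo : f ∈ o := by
          by_contra hfo
          have := hmin fᶜ ((ho.compl_mem_iff f hf).2 hfo) (Set.compl_subset_comm.1 hgf)
          exact hfe' (by rw [← this, compl_compl])
        refine ⟨hfo, fun hfe => ?_⟩
        obtain ⟨x, hx⟩ := hE.nonempty _ (hE.compl_mem e heE)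
        exact hx (hfe ▸ hgf hx)
      · refine ⟨ho.mem_of_subset g hg f hf hgf, fun hfe => hge ?_⟩
        exact hmin g hg (hfe ▸ hgf)
    · intro x
      refine ((ho.finite x).insert eᶜ).subset ?_
      rintro f ⟨rfl | hf, hx⟩
      · exact Or.inl rfl
      · exact Or.inr ⟨hf.1, hx⟩

theorem IsOrientation.exists_borders (hE : IsTreeSet E) (ho : IsOrientation E o) {x : X}
    (hox : o ≠ {e ∈ E | x ∈ e}) : ∃ e, Borders E o e ∧ x ∉ e := by
  have hne : {e ∈ o | x ∉ e}.Nonempty := by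
    rw [Set.nonempty_iff_ne_empty]
    intro h
    refine hox (ho.eq_of_subset (hE.isOrientation x) fun e he => ⟨ho.subset he, ?_⟩)
    by_contra hx
    exact (h ▸ ⟨he, hx⟩ : e ∈ (∅ : Set (Set X)))
  obtain ⟨e, he⟩ := (ho.finite x).exists_minimal hne
  refine ⟨e, ho.borders hE he.prop.1 fun f hf hfe => ?_, he.prop.2⟩
  exact hfe.antisymm (he.le_of_le ⟨hf, fun hx => he.prop.2 (hfe hx)⟩ hfe)

theorem Borders.mem_iff (hE : IsTreeSet E) (h : Borders E o e) (hf : f ∈ E) :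
    f ∈ o ↔ e ⊆ f ∨ eᶜ ⊂ f := by
  have heE := h.isOrientation.subset h.mem
  have key : ∀ f ∈ E, eᶜ ⊂ f → f ∈ o := by
    intro f hf hef
    rcases h.isOrientation_flip.mem_of_subset eᶜ (Set.mem_insert _ _) f hf hef.1 with h' | h'
    · exact absurd h'.symm hef.ne
    · exact h'.1
  refine ⟨fun hfo => ?_, ?_⟩
  · by_contra! hcon
    rcases hE.nested heE hf with h1 | h1 | h1 | h1
    · exact hcon.1 h1
    · exact (h.isOrientation.compl_mem_iff f hf).1
        (h.isOrientation.mem_of_subset e h.mem _ (hE.compl_mem f hf) h1) hfo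
    · by_cases hfe : eᶜ = f
      · subst hfe
        exact (h.isOrientation.compl_mem_iff e heE).1 hfo h.mem
      · exact hcon.2 (h1.ssubset_of_ne hfe)
    · refine (h.isOrientation.compl_mem_iff f hf).1 (key _ (hE.compl_mem f hf)
        (h1.ssubset_of_ne fun hef => hcon.1 (compl_injective hef).le)) hfo
  · rintro (h1 | h1)
    · exact h.isOrientation.mem_of_subset e h.mem f hf h1
    · exact key f hf h1

theorem Borders.unique (hE : IsTreeSet E) (h : Borders E o e) (h' : Borders E o' e) : o = o' :=
  h.isOrientation.eq_of_subset h'.isOrientation fun f hf => by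
    have hfE := h.isOrientation.subset hf
    rwa [h'.mem_iff hE hfE, ← h.mem_iff hE hfE]

theorem Borders.not_isOrientation (h : Borders E o e) : ¬ IsOrientation E (o \ {e}) := by
  intro h'
  have heE := h.isOrientation.subset h.mem
  exact (h.isOrientation.compl_mem_iff e heE).1 ((h'.compl_mem_iff e heE).2 (by simp)).1 h.mem

theorem Borders.flip (h : Borders E o e) :
    Borders E (insert eᶜ (o \ {e})) eᶜ ∧ insert eᶜ (o \ {e}) \ {eᶜ} = o \ {e} := by
  have heE := h.isOrientation.subset h.mem
  have hec : eᶜ ∉ o := fun h' => (h.isOrientation.compl_mem_iff e heE).1 h' h.mem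
  have h1 : insert eᶜ (o \ {e}) \ {eᶜ} = o \ {e} := by
    rw [Set.insert_sdiff_self_of_notMem]
    exact fun h => hec h.1
  refine ⟨⟨h.isOrientation_flip, Set.mem_insert _ _, ?_⟩, h1⟩
  rw [h1, compl_compl, Set.insert_sdiff_self_of_mem h.mem]
  exact h.isOrientation

theorem treeOf_adj {s t : TreeVertex E} : (treeOf E).Adj s t ↔
    (∃ e, Borders E s.1 e ∧ t.1 = s.1 \ {e}) ∨ ∃ e, Borders E t.1 e ∧ s.1 = t.1 \ {e} := by
  rw [treeOf, SimpleGraph.fromRel_adj, and_iff_right_iff_imp]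
  rintro (⟨e, h, h'⟩ | ⟨e, h, h'⟩) rfl
  · exact h.not_isOrientation (h' ▸ h.isOrientation)
  · exact h.not_isOrientation (h' ▸ h.isOrientation)

theorem treeOf_connected [Nonempty X] (hE : IsTreeSet E) : (treeOf E).Connected := by
  obtain ⟨x⟩ := ‹Nonempty X›
  let v : TreeVertex E := ⟨_, Or.inl (hE.isOrientation x)⟩
  have key : ∀ o (ho : IsOrientation E o), (treeOf E).Reachable v ⟨o, Or.inl ho⟩ := by
    intro o ho
    induction hn : {e ∈ o | x ∉ e}.ncard using Nat.strong_induction_on generalizing o with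
    | _ n ih =>
      by_cases hox : o = {e ∈ E | x ∈ e}
      · subst hox; exact SimpleGraph.Reachable.refl _
      obtain ⟨e, he, hx⟩ := ho.exists_borders hE hox
      obtain ⟨h1, h2⟩ := he.flip
      refine (ih _ ?_ _ he.isOrientation_flip rfl).trans ?_
      · rw [← hn]
        refine Set.ncard_lt_ncard ((Set.ssubset_iff_of_subset ?_).2 ⟨e, ⟨he.mem, hx⟩, ?_⟩)
          (ho.finite x)
        · rintro f ⟨rfl | hf, hxf⟩
          · exact absurd hx hxf
          · exact ⟨hf.1, hxf⟩
        · rintro ⟨h | h, -⟩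
          · exact hE.ne_compl (ho.subset he.mem) h
          · exact h.2 rfl
      · let s : TreeVertex E := ⟨o \ {e}, Or.inr ⟨o, e, he, rfl⟩⟩
        refine (SimpleGraph.Adj.reachable (v := s) ?_).trans (SimpleGraph.Adj.reachable ?_)
        · exact treeOf_adj.2 (Or.inl ⟨eᶜ, h1, h2.symm⟩)
        · exact treeOf_adj.2 (Or.inr ⟨e, he, rfl⟩)
  refine (SimpleGraph.connected_iff_exists_forall_reachable _).2 ⟨v, ?_⟩
  rintro ⟨s, hs⟩
  rcases hs with hs | ⟨o, e, he, hs⟩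
  · exact key s hs
  · exact (key o he.isOrientation).trans
      (SimpleGraph.Adj.reachable (treeOf_adj.2 (Or.inl ⟨e, he, hs⟩)))

theorem treeOf_isAcyclic (hE : IsTreeSet E) : (treeOf E).IsAcyclic := by
  rw [SimpleGraph.isAcyclic_iff_forall_adj_isBridge]
  have key : ∀ s t : TreeVertex E, (∃ e, Borders E s.1 e ∧ t.1 = s.1 \ {e}) →
      (treeOf E).IsBridge s(s, t) := by
    rintro s t ⟨e, h, ht⟩
    rw [SimpleGraph.isBridge_iff]
    rintro ⟨w⟩
    have : ∀ {u v : TreeVertex E}, (((treeOf E) \ SimpleGraph.fromEdgeSet {s(s, t)}).Walk u v) →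
        e ∈ u.1 → e ∈ v.1 := by
      intro u v w
      induction w with
      | nil => exact id
      | cons hadj _ ih =>
        rename_i u v _ _
        refine fun hu => ih ?_
        by_contra hv
        rw [SimpleGraph.sdiff_adj, SimpleGraph.fromEdgeSet_adj] at hadj
        obtain ⟨hadj, hne⟩ := hadj
        rcases treeOf_adj.1 hadj with ⟨f, hf, h'⟩ | ⟨f, hf, h'⟩
        · have hef : e = f := by
            by_contra hef
            exact hv (h' ▸ ⟨hu, hef⟩)
          subst hef
          have hus : u = s := Subtype.ext (hf.unique hE h)
          have hvt : v = t := Subtype.ext (by rw [h', ht, hus])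
          exact hne ⟨by rw [hus, hvt]; rfl, hadj.ne⟩
        · exact hv (h' ▸ hu : e ∈ v.1 \ {f}).1
    exact (ht ▸ this w h.mem : e ∈ s.1 \ {e}).2 rfl
  intro s t hst
  rcases treeOf_adj.1 hst with h | h
  · exact key s t h
  · rw [Sym2.eq_swap]; exact key t s h

section Action

variable {G : Type*} [Group G] [MulAction G X]

theorem IsOrientation.smul (hG : ∀ g : G, ∀ e ∈ E, g • e ∈ E) (ho : IsOrientation E o) (g : G) :
    IsOrientation E (g • o) where
  subset := by
    rintro _ ⟨e, he, rfl⟩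
    exact hG g e (ho.subset he)
  compl_mem_iff e he := by
    rw [Set.mem_smul_set_iff_inv_smul_mem, Set.mem_smul_set_iff_inv_smul_mem, Set.smul_set_compl]
    exact ho.compl_mem_iff _ (hG _ e he)
  mem_of_subset e he f hf hef := by
    rw [Set.mem_smul_set_iff_inv_smul_mem] at he ⊢
    exact ho.mem_of_subset _ he _ (hG _ f hf) (Set.smul_set_mono hef)
  finite x := by
    refine ((ho.finite (g⁻¹ • x)).smul_set (a := g)).subset fun e ⟨he, hx⟩ => ?_
    rw [Set.mem_smul_set_iff_inv_smul_mem] at he ⊢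
    exact ⟨he, by rwa [Set.smul_mem_smul_set_iff]⟩

theorem Borders.smul (hG : ∀ g : G, ∀ e ∈ E, g • e ∈ E) (h : Borders E o e) (g : G) :
    Borders E (g • o) (g • e) where
  isOrientation := h.isOrientation.smul hG g
  mem := Set.smul_mem_smul_set h.mem
  isOrientation_flip := by
    have := h.isOrientation_flip.smul hG g
    rwa [Set.smul_set_insert, Set.smul_set_sdiff, Set.smul_set_singleton, Set.smul_set_compl] at this

/-- The action on the tree of an invariant family of sets. -/
def treeAction (hG : ∀ g : G, ∀ e ∈ E, g • e ∈ E) : G →* Equiv.Perm (TreeVertex E) :=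
  MonoidHom.toHomPerm
    { toFun := fun g s => ⟨g • s.1, s.2.imp (fun h => h.smul hG g) (by
        rintro ⟨o, e, h, h'⟩
        exact ⟨g • o, g • e, h.smul hG g, by
          rw [h', Set.smul_set_sdiff, Set.smul_set_singleton]⟩)⟩
      map_one' := funext fun s => Subtype.ext (one_smul G s.1)
      map_mul' := fun g g' => funext fun s => Subtype.ext (mul_smul g g' s.1) }

theorem treeAction_coe (hG : ∀ g : G, ∀ e ∈ E, g • e ∈ E) (g : G) (s : TreeVertex E) :
    (treeAction hG g s).1 = g • s.1 := rfl

/-- An invariant nested family of sets, with finitely many orbits and finite stabilizers, gives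
rise to an action on a tree whose vertices with infinite stabilizers come from orientations. -/
theorem IsTreeSet.exists_tree [Nonempty X] (hE : IsTreeSet E)
    (hG : ∀ g : G, ∀ e ∈ E, g • e ∈ E) {F : Set (Set X)} (hF : F.Finite)
    (hFE : ∀ e ∈ E, ∃ f ∈ F, ∃ g : G, e = g • f) (hst : ∀ e ∈ E, {g : G | g • e = e}.Finite) :
    ∃ (T : SimpleGraph (TreeVertex E)) (ρ : G →* Equiv.Perm (TreeVertex E)),
      T.IsTree ∧ (∀ g u v, T.Adj (ρ g u) (ρ g v) ↔ T.Adj u v) ∧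
      (∀ g u v, T.Adj u v → ¬(ρ g u = v ∧ ρ g v = u)) ∧
      (∃ s : Set (TreeVertex E), s.Finite ∧ ∀ w, ∃ w' ∈ s, ∃ g, ρ g w' = w) ∧
      (∃ s : Set (TreeVertex E × TreeVertex E), s.Finite ∧ ∀ u v, T.Adj u v →
        ∃ p ∈ s, ∃ g, (ρ g p.1 = u ∧ ρ g p.2 = v) ∨ (ρ g p.1 = v ∧ ρ g p.2 = u)) ∧
      (∀ u v, T.Adj u v → {g | ρ g u = u ∧ ρ g v = v}.Finite) ∧
      ∃ vert : ∀ o, IsOrientation E o → TreeVertex E,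
        (∀ g o o' ho ho', ρ g (vert o ho) = vert o' ho' ↔ g • o = o') ∧
        ∀ w, (∀ o ho, vert o ho ≠ w) → {g | ρ g w = w}.Finite := by
  have hadj : ∀ (g : G) u v, (treeOf E).Adj u v →
      (treeOf E).Adj (treeAction hG g u) (treeAction hG g v) := by
    intro g u v h
    rw [treeOf_adj] at h ⊢
    simp only [treeAction_coe]
    refine h.imp ?_ ?_ <;>
    · rintro ⟨e, h, h'⟩
      exact ⟨g • e, h.smul hG g, by rw [h', Set.smul_set_sdiff, Set.smul_set_singleton]⟩
  have hedge : ∀ u v : TreeVertex E, (∃ e, Borders E u.1 e ∧ v.1 = u.1 \ {e}) →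
      {g : G | g • u.1 = u.1 ∧ g • v.1 = v.1}.Finite := by
    rintro u v ⟨e, h, h'⟩
    refine (hst e (h.isOrientation.subset h.mem)).subset ?_
    rintro g ⟨hu, hv⟩
    have he : u.1 \ v.1 = {e} := by
      rw [h', Set.sdiff_sdiff_cancel_left (Set.singleton_subset_iff.2 h.mem)]
    have : g • ({e} : Set (Set X)) = {e} := by
      rw [← he, Set.smul_set_sdiff, hu, hv]
    simpa using this
  have hsub : ∀ e, {o | Borders E o e}.Finite := fun e =>
    Set.Subsingleton.finite fun o h o' h' => h.unique hE h'
  have htrans : ∀ o e, Borders E o e → ∃ f ∈ F, ∃ g : G, ∃ o', Borders E o' f ∧ o = g • o' ∧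
      o \ {e} = g • (o' \ {f}) := by
    intro o e h
    obtain ⟨f, hf, g, rfl⟩ := hFE e (h.isOrientation.subset h.mem)
    refine ⟨f, hf, g, g⁻¹ • o, by simpa using h.smul hG g⁻¹, by simp, ?_⟩
    rw [Set.smul_set_sdiff, Set.smul_set_singleton, smul_inv_smul]
  obtain ⟨x⟩ := ‹Nonempty X›
  refine ⟨treeOf E, treeAction hG, ⟨haveI : Nonempty X := ⟨x⟩; treeOf_connected hE,
    treeOf_isAcyclic hE⟩, fun g u v => ⟨fun h => ?_, hadj g u v⟩, ?_, ?_, ?_, ?_,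
    fun o ho => ⟨o, Or.inl ho⟩, fun g o o' ho ho' => Subtype.ext_iff, ?_⟩
  · simpa using hadj g⁻¹ _ _ h
  · rintro g u v h ⟨h1, h2⟩
    replace h1 := Subtype.ext_iff.1 h1
    replace h2 := Subtype.ext_iff.1 h2
    rw [treeAction_coe] at h1 h2
    rcases treeOf_adj.1 h with ⟨e, h, h'⟩ | ⟨e, h, h'⟩
    · exact h.not_isOrientation (h' ▸ h1 ▸ h.isOrientation.smul hG g)
    · exact h.not_isOrientation (h' ▸ h2 ▸ h.isOrientation.smul hG g)
  · refine ⟨Subtype.val ⁻¹' ({{e ∈ E | x ∈ e}} ∪ ⋃ f ∈ F, ({o | Borders E o f} ∪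
      (fun o => o \ {f}) '' {o | Borders E o f})), Set.Finite.preimage Subtype.val_injective.injOn
      ((Set.finite_singleton _).union (hF.biUnion fun f _ =>
        (hsub f).union ((hsub f).image _))), ?_⟩
    rintro ⟨w, hw⟩
    rcases hw with hw | ⟨o, e, h, hw⟩
    · by_cases hx : w = {e ∈ E | x ∈ e}
      · exact ⟨⟨w, Or.inl hw⟩, Or.inl hx, 1, by rw [map_one]; rfl⟩
      · obtain ⟨e, he, -⟩ := hw.exists_borders hE hx
        obtain ⟨f, hf, g, o, h, rfl, -⟩ := htrans _ _ he
        exact ⟨⟨o, Or.inl h.isOrientation⟩, Or.inr (Set.mem_biUnion hf (Or.inl h)), g,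
          Subtype.ext rfl⟩
    · obtain ⟨f, hf, g, o, h, -, h'⟩ := htrans _ _ h
      exact ⟨⟨o \ {f}, Or.inr ⟨o, f, h, rfl⟩⟩, Or.inr (Set.mem_biUnion hf (Or.inr ⟨o, h, rfl⟩)), g,
        Subtype.ext (hw.trans h').symm⟩
  · refine ⟨Prod.map Subtype.val Subtype.val ⁻¹' (⋃ f ∈ F, (fun o => (o, o \ {f})) ''
      {o | Borders E o f}), Set.Finite.preimage
        (Subtype.val_injective.prodMap Subtype.val_injective).injOn
        (hF.biUnion fun f _ => (hsub f).image _), fun u v huv => ?_⟩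
    have key : ∀ u v : TreeVertex E, (∃ e, Borders E u.1 e ∧ v.1 = u.1 \ {e}) →
        ∃ p ∈ Prod.map Subtype.val Subtype.val ⁻¹' (⋃ f ∈ F, (fun o => (o, o \ {f})) ''
          {o | Borders E o f}), ∃ g, treeAction hG g p.1 = u ∧ treeAction hG g p.2 = v := by
      rintro u v ⟨e, h, h'⟩
      obtain ⟨f, hf, g, o, h1, h2, h3⟩ := htrans _ _ h
      exact ⟨(⟨o, Or.inl h1.isOrientation⟩, ⟨o \ {f}, Or.inr ⟨o, f, h1, rfl⟩⟩),
        Set.mem_biUnion hf ⟨o, h1, rfl⟩, g, Subtype.ext h2.symm, Subtype.ext (h'.trans h3).symm⟩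
    rcases treeOf_adj.1 huv with h | h
    · obtain ⟨p, hp, g, h⟩ := key u v h
      exact ⟨p, hp, g, Or.inl h⟩
    · obtain ⟨p, hp, g, h⟩ := key v u h
      exact ⟨p, hp, g, Or.inr h⟩
  · intro u v huv
    rcases treeOf_adj.1 huv with h | h
    · exact (hedge u v h).subset fun g hg => ⟨Subtype.ext_iff.1 hg.1, Subtype.ext_iff.1 hg.2⟩
    · exact (hedge v u h).subset fun g hg => ⟨Subtype.ext_iff.1 hg.2, Subtype.ext_iff.1 hg.1⟩
  · rintro ⟨w, hw⟩ h
    rcases hw with hw | ⟨o, e, ho, rfl⟩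
    · exact absurd rfl (h w hw)
    · have he := ho.isOrientation.subset ho.mem
      refine ((hst e he).union (finite_setOf_smul_eq_right (b := eᶜ) (hst e he))).subset ?_
      intro g hg
      replace hg : g • (o \ {e}) = o \ {e} := Subtype.ext_iff.1 hg
      have hs := ho.smul hG g
      have hgo : g • o \ {g • e} = o \ {e} := by
        rwa [← Set.smul_set_singleton, ← Set.smul_set_sdiff]
      have h1 : g • e ∉ o \ {e} := by rw [← hgo]; simp
      have h2 : (g • e)ᶜ ∉ o \ {e} := by
        rw [← hgo]
        exact fun h => (hs.isOrientation.compl_mem_iff _ (hG g e he)).1 h.1 hs.mem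
      have h3 := ho.isOrientation.compl_mem_iff _ (hG g e he)
      by_cases h4 : g • e = e
      · exact Or.inl h4
      · refine Or.inr ?_
        have h5 : g • e ∉ o := fun h => h1 ⟨h, h4⟩
        have h6 : (g • e)ᶜ = e := by
          by_contra h6
          exact h2 ⟨h3.2 h5, h6⟩
        rw [Set.mem_ofPred_eq, ← h6, compl_compl, h6]

end Action

end TreeSet

/-- Finitely many cuts with finite boundary are determined by an invariant nested family of cuts
with finitely many orbits and finite stabilizers. -/
theorem exists_isTreeSet {G X : Type*} [Group G] [MulAction G X] {Y : Set (X × X)}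
    (hG : ∀ g : G, g • Y = Y) (hY : BoundaryConnected Y)
    (hst : ∀ p ∈ Y, {g : G | g • p = p}.Finite) {C : Set (Set X)} (hC : C.Finite)
    (hCf : ∀ c ∈ C, (boundary Y c).Finite) :
    ∃ E F : Set (Set X), IsTreeSet E ∧ (∀ g : G, ∀ e ∈ E, g • e ∈ E) ∧ F.Finite ∧
      (∀ e ∈ E, ∃ f ∈ F, ∃ g : G, e = g • f) ∧ (∀ e ∈ E, {g : G | g • e = e}.Finite) ∧
      ∀ c ∈ C, Determines E c := by
  obtain ⟨k, hk⟩ := (hC.image fun c => (boundary Y c).ncard).bddAbove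
  have hdet : ∀ c ∈ C, Determines (nestedCuts Y k) c := fun c hc =>
    determines_nestedCuts hY (hCf c hc) (hk ⟨c, hc, rfl⟩)
  choose! F hF hFf hFc using hdet
  set S : Set (Set X) := ⋃ c ∈ C, F c with hS
  have hSf : S.Finite := hC.biUnion hFf
  have hSk : S ⊆ nestedCuts Y k := Set.iUnion₂_subset hF
  set E : Set (Set X) := {e | ∃ f ∈ S ∪ compl '' S, ∃ g : G, e = g • f} with hE
  have hSk' : S ∪ compl '' S ⊆ nestedCuts Y k := by
    rintro e (he | ⟨f, hf, rfl⟩)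
    · exact hSk he
    · exact compl_mem_nestedCuts (hSk hf)
  have hEk : E ⊆ nestedCuts Y k := by
    rintro e ⟨f, hf, g, rfl⟩
    exact smul_mem_nestedCuts hG (hSk' hf) g
  refine ⟨E, S ∪ compl '' S, ⟨fun e he => (hEk he).1.1.nonempty, ?_, fun c hc d hd =>
    not_crosses_of_mem_nestedCuts hY (hEk hc) (hEk hd), fun x y =>
    (finite_setOf_mem_nestedCuts hY x y).subset fun e he => ⟨hEk he.1, he.2⟩⟩, ?_,
    hSf.union (hSf.image _), fun e he => he, fun e he =>
    finite_setOf_smul_eq_of_mem_nestedCuts hG hY hst (hEk he), fun c hc => ?_⟩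
  · rintro e ⟨f, hf, g, rfl⟩
    refine ⟨fᶜ, ?_, g, by rw [Set.smul_set_compl]⟩
    rcases hf with hf | ⟨f, hf, rfl⟩
    · exact Or.inr ⟨f, hf, rfl⟩
    · exact Or.inl (by rwa [compl_compl])
  · rintro g e ⟨f, hf, g', rfl⟩
    exact ⟨f, hf, g * g', by rw [mul_smul]⟩
  · exact ⟨F c, fun e he => ⟨e, Or.inl (Set.mem_biUnion hc he), 1, by rw [one_smul]⟩, hFf c hc,
      hFc c hc⟩

/-- An invariant nested family of sets for a countable group gives rise to an action on a tree
with countably many vertices. -/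
theorem IsTreeSet.exists_small_tree {G X : Type*} [Group G] [MulAction G X] [Countable G]
    [Nonempty X] {E : Set (Set X)} (hE : IsTreeSet E)
    (hG : ∀ g : G, ∀ e ∈ E, g • e ∈ E) {F : Set (Set X)} (hF : F.Finite)
    (hFE : ∀ e ∈ E, ∃ f ∈ F, ∃ g : G, e = g • f) (hst : ∀ e ∈ E, {g : G | g • e = e}.Finite) :
    ∃ (W : Type) (T : SimpleGraph W) (ρ : G →* Equiv.Perm W),
      T.IsTree ∧ (∀ g u v, T.Adj (ρ g u) (ρ g v) ↔ T.Adj u v) ∧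
      (∀ g u v, T.Adj u v → ¬(ρ g u = v ∧ ρ g v = u)) ∧
      (∃ s : Set W, s.Finite ∧ ∀ w, ∃ w' ∈ s, ∃ g, ρ g w' = w) ∧
      (∃ s : Set (W × W), s.Finite ∧ ∀ u v, T.Adj u v →
        ∃ p ∈ s, ∃ g, (ρ g p.1 = u ∧ ρ g p.2 = v) ∨ (ρ g p.1 = v ∧ ρ g p.2 = u)) ∧
      (∀ u v, T.Adj u v → {g | ρ g u = u ∧ ρ g v = v}.Finite) ∧
      ∃ vert : ∀ o, IsOrientation E o → W,
        (∀ g o o' ho ho', ρ g (vert o ho) = vert o' ho' ↔ g • o = o') ∧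
        ∀ w, (∀ o ho, vert o ho ≠ w) → {g | ρ g w = w}.Finite := by
  obtain ⟨T, ρ, h1, h2, h3, ⟨s, hs, h4⟩, ⟨t, ht, h5⟩, h6, vert, h7, h8⟩ :=
    hE.exists_tree hG hF hFE hst
  have : Countable (TreeVertex E) := by
    rw [← Set.countable_univ_iff]
    refine (hs.countable.biUnion (t := fun w' _ => Set.range fun g => ρ g w') fun w' _ =>
      Set.countable_range _).mono fun w _ => ?_
    obtain ⟨w', hw', g, rfl⟩ := h4 w
    exact Set.mem_biUnion hw' ⟨g, rfl⟩
  have : Small.{0} (TreeVertex E) := Countable.toSmall _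
  set e := equivShrink.{0} (TreeVertex E)
  have hρ : ∀ g w, (e.permCongrHom.toMonoidHom.comp ρ) g w = e (ρ g (e.symm w)) :=
    fun g w => rfl
  refine ⟨Shrink.{0} (TreeVertex E), T.comap e.symm, e.permCongrHom.toMonoidHom.comp ρ,
    (SimpleGraph.Iso.comap e.symm T).isTree_iff.2 h1, ?_, ?_, ⟨e '' s, hs.image _, ?_⟩,
    ⟨Prod.map e e '' t, ht.image _, ?_⟩, ?_, fun o ho => e (vert o ho), ?_, ?_⟩
  · simp [h2]
  · exact fun g u v h h' => h3 g _ _ h ⟨e.eq_symm_apply.2 h'.1, e.eq_symm_apply.2 h'.2⟩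
  · intro w
    obtain ⟨w', hw', g, h⟩ := h4 (e.symm w)
    exact ⟨e w', ⟨w', hw', rfl⟩, g, by simp [h]⟩
  · intro u v huv
    obtain ⟨p, hp, g, h⟩ := h5 _ _ huv
    refine ⟨_, ⟨p, hp, rfl⟩, g, ?_⟩
    simpa [hρ, ← Equiv.eq_symm_apply] using h
  · intro u v huv
    simpa [hρ, ← Equiv.eq_symm_apply] using h6 _ _ huv
  · simpa [hρ] using h7
  · intro w hw
    simpa [hρ, ← Equiv.eq_symm_apply] using h8 (e.symm w) fun o ho h => hw o ho (by simp [h])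

/-- A group `G` acting on `A` and containing `A` with finite index, in such a way that `A` acts by
conjugation and `G` permutes the conjugates of the peripheral subgroups `P i`. -/
structure PeripheralExtension {A κ : Type*} [Group A] (P : κ → Subgroup A) (G : Type*) [Group G]
    [MulDistribMulAction G A] where
  /-- The inclusion of `A`. -/
  incl : A →* G
  incl_injective : Function.Injective incl
  incl_smul : ∀ a b, incl a • b = a * b * a⁻¹
  /-- The `A`-component of an element, for a choice of coset representatives. -/
  proj : G → A
  proj_incl_mul : ∀ a g, proj (incl a * g) = a * proj g
  finite_reps : (Set.range fun g => (incl (proj g))⁻¹ * g).Finite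
  exists_smul_eq : ∀ (g : G) i, ∃ j x, g • P i = incl x • P j

theorem finite_setOf_zpow_smul_mem {G α : Type*} [Group G] [MulAction G α] {g : G} {e : α}
    {K : Set α} (hg : Function.Injective fun z : ℤ => g ^ z) (he : {h : G | h • e = e}.Finite)
    (hK : K.Finite) : {z : ℤ | g ^ z • e ∈ K}.Finite := by
  have : {z : ℤ | g ^ z • e ∈ K} = (fun z : ℤ => g ^ z) ⁻¹' ⋃ f ∈ K, {h : G | h • e = f} := by
    ext z; simp
  rw [this]
  exact (hK.biUnion fun f _ => finite_setOf_smul_eq_right he).preimage hg.injOn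

theorem injective_zpow_of_pow_ne_one {G : Type*} [Group G] {g : G} (h : ∀ k : ℕ, 0 < k → g ^ k ≠ 1) :
    Function.Injective fun z : ℤ => g ^ z := by
  rw [injective_zpow_iff_not_isOfFinOrder, isOfFinOrder_iff_pow_eq_one]
  rintro ⟨k, hk, hk'⟩
  exact h k hk hk'

namespace PeripheralExtension

variable {A κ G : Type*} [Group A] {P : κ → Subgroup A} [Group G] [MulDistribMulAction G A]

/-- The set of conjugates of the peripheral subgroups. -/
def conjugates (P : κ → Subgroup A) (G : Type*) [Group G] [MulDistribMulAction G A] :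
    SubMulAction G (Subgroup A) where
  carrier := {Q | ∃ i, ∃ g : G, Q = g • P i}
  smul_mem' := by
    rintro g _ ⟨i, h, rfl⟩
    exact ⟨i, g * h, by rw [mul_smul]⟩

/-- The peripheral subgroup `P i` among its conjugates. -/
def base (P : κ → Subgroup A) (G : Type*) [Group G] [MulDistribMulAction G A] (i : κ) :
    conjugates P G :=
  ⟨P i, i, 1, (one_smul _ _).symm⟩

/-- The coned-off Cayley graph with respect to `S`: the group `G`, together with one cone point for
each conjugate of a peripheral subgroup. -/
def conedCayley (P : κ → Subgroup A) {G : Type*} [Group G] [MulDistribMulAction G A]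
    (S : Set G) : Set ((G ⊕ conjugates P G) × (G ⊕ conjugates P G)) :=
  {p | ∃ e ∈ (fun s => (Sum.inl 1, Sum.inl s)) '' S ∪
    Set.range fun i => (Sum.inl 1, Sum.inr (base P G i)), ∃ g : G, p = g • e}

theorem smul_conedCayley {S : Set G} (g : G) : g • conedCayley P S = conedCayley P S := by
  ext p
  rw [Set.mem_smul_set_iff_inv_smul_mem]
  constructor
  · rintro ⟨e, he, h, hp⟩
    exact ⟨e, he, g * h, by rw [mul_smul, ← hp, smul_inv_smul]⟩
  · rintro ⟨e, he, h, rfl⟩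
    exact ⟨e, he, g⁻¹ * h, by rw [mul_smul]⟩

theorem finite_setOf_smul_eq_of_mem_conedCayley {S : Set G} : ∀ p ∈ conedCayley P S,
    {g : G | g • p = p}.Finite := by
  have : ∀ h (w : G ⊕ conjugates P G), {g : G | g • ((Sum.inl h : G ⊕ conjugates P G), w) =
      (Sum.inl h, w)}.Finite := by
    intro h w
    refine (Set.finite_singleton 1).subset fun g hg => ?_
    simpa using congrArg Prod.fst hg
  rintro p ⟨e, ⟨s, -, rfl⟩ | ⟨i, rfl⟩, g, rfl⟩ <;> exact this _ _

theorem boundaryConnected_conedCayley {S : Set G} (hS : Subgroup.closure S = ⊤) :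
    BoundaryConnected (conedCayley P S) := by
  intro c hc
  have hedge : ∀ p ∈ conedCayley P S, (p.1 ∈ c ↔ p.2 ∈ c) := by
    intro p hp
    by_contra h
    exact (hc ▸ ⟨hp, h⟩ : p ∈ (∅ : Set _))
  have hgen : ∀ h ∈ Subgroup.closure S, ∀ g : G,
      (Sum.inl g : G ⊕ conjugates P G) ∈ c ↔ Sum.inl (g * h) ∈ c := by
    intro h hh
    induction hh using Subgroup.closure_induction with
    | mem s hs =>
      intro g
      simpa using hedge _ ⟨_, Or.inl ⟨s, hs, rfl⟩, g, rfl⟩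
    | one => simp
    | mul x y _ _ hx hy => intro g; rw [hx g, hy (g * x), mul_assoc]
    | inv x _ hx => intro g; simpa using (hx (g * x⁻¹)).symm
  have hall : ∀ w, w ∈ c ↔ Sum.inl 1 ∈ c := by
    have hinl : ∀ g : G, (Sum.inl g : G ⊕ conjugates P G) ∈ c ↔ Sum.inl 1 ∈ c := fun g => by
      simpa using (hgen g (hS ▸ Subgroup.mem_top g) 1).symm
    rintro (g | ⟨Q, i, g, rfl⟩)
    · exact hinl g
    · rw [← hinl g]
      exact (hedge (Sum.inl g, Sum.inr (g • base P G i)) ⟨_, Or.inr ⟨i, rfl⟩, g, by simp⟩).symm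
  by_cases h1 : Sum.inl 1 ∈ c
  · exact Or.inr (Set.eq_univ_of_forall fun w => (hall w).2 h1)
  · exact Or.inl (Set.eq_empty_of_forall_notMem fun w hw => h1 ((hall w).1 hw))

variable (M : PeripheralExtension P G)

theorem incl_smul_eq_map (x : A) (K : Subgroup A) :
    M.incl x • K = K.map (MulAut.conj x).toMonoidHom := by
  ext b
  simp [Subgroup.mem_smul_pointwise_iff_exists, M.incl_smul]

theorem exists_eq_smul_base (Q : conjugates P G) : ∃ i x, Q = M.incl x • base P G i := by
  obtain ⟨Q, i, g, rfl⟩ := Q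
  obtain ⟨j, x, h⟩ := M.exists_smul_eq g i
  exact ⟨j, x, Subtype.ext h⟩

/-- The extension to the coned-off Cayley graph of a set of elements of `A`. -/
def extend (c : Set A) : Set (G ⊕ conjugates P G) :=
  {w | Sum.elim (fun g => M.proj g ∈ c) (fun Q => ∃ p ∈ Q.1, p ≠ 1 ∧ p ∈ c) w}

theorem inl_mem_extend {c : Set A} {g : G} : Sum.inl g ∈ M.extend c ↔ M.proj g ∈ c := Iff.rfl

theorem inr_mem_extend {c : Set A} (i : κ) (x : A) :
    Sum.inr (M.incl x • base P G i) ∈ M.extend c ↔ ∃ p ∈ P i, p ≠ 1 ∧ x * p * x⁻¹ ∈ c := by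
  have : Sum.inr (M.incl x • base P G i) ∈ M.extend c ↔
    ∃ p ∈ M.incl x • P i, p ≠ 1 ∧ p ∈ c := Iff.rfl
  rw [this, M.incl_smul_eq_map]
  simp

theorem finite_setOf_incl_smul (C : SeparatingCuts P) {c : Set A} (hc : c ∈ C.cuts)
    (w : G ⊕ conjugates P G) : {a | ¬ (a ∈ c ↔ M.incl a • w ∈ M.extend c)}.Finite := by
  rcases w with g | Q
  · simpa [inl_mem_extend, M.proj_incl_mul] using C.finite_mul_right c hc (M.proj g)
  · obtain ⟨i, x, rfl⟩ := M.exists_eq_smul_base Q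
    refine ((C.finite_mul_right c hc x).union ((C.finite_conj c hc i).preimage
      (mul_left_injective x).injOn)).subset fun a ha => ?_
    rw [Set.mem_ofPred_eq, Sum.smul_inr, smul_smul, ← map_mul, inr_mem_extend] at ha
    by_contra h
    simp only [Set.mem_union, Set.mem_preimage, Set.mem_ofPred_eq, not_or, not_not] at h
    exact ha (h.1.trans h.2)

theorem finite_boundary_extend [Finite κ] (C : SeparatingCuts P) {c : Set A} (hc : c ∈ C.cuts)
    {S : Set G} (hS : S.Finite) : (boundary (conedCayley P S) (M.extend c)).Finite := by
  have hfin : ∀ v w, {a | ¬ (M.incl a • v ∈ M.extend c ↔ M.incl a • w ∈ M.extend c)}.Finite :=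
    fun v w => ((M.finite_setOf_incl_smul C hc v).union
      (M.finite_setOf_incl_smul C hc w)).subset fun a ha => by
        by_contra h
        simp only [Set.mem_union, Set.mem_ofPred_eq, not_or, not_not] at h
        exact ha (h.1.symm.trans h.2)
  have hZ := Set.Finite.image2 (fun r e => r • e) M.finite_reps
    ((hS.image fun s => ((Sum.inl 1 : G ⊕ conjugates P G), (Sum.inl s : G ⊕ conjugates P G))).union
      (Set.finite_range fun i => (Sum.inl 1, Sum.inr (base P G i))))
  refine (hZ.biUnion fun z _ => (hfin z.1 z.2).image fun a => M.incl a • z).subset ?_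
  rintro p ⟨⟨e, he, g, rfl⟩, hp⟩
  refine Set.mem_biUnion (x := ((M.incl (M.proj g))⁻¹ * g) • e) ⟨_, ⟨g, rfl⟩, e, he, rfl⟩
    ⟨M.proj g, ?_, ?_⟩
  · simpa [smul_smul] using hp
  · simp [smul_smul]

section Orientation

variable {C : SeparatingCuts P} {E o : Set (Set (G ⊕ conjugates P G))}

theorem injective_sep_inr_mem (hG : ∀ g : G, ∀ e ∈ E, g • e ∈ E)
    (hdet : ∀ c ∈ C.cuts, Determines E (M.extend c)) :
    Function.Injective fun Q : conjugates P G => {e ∈ E | Sum.inr Q ∈ e} := by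
  intro Q Q' hQ
  obtain ⟨i, x, rfl⟩ := M.exists_eq_smul_base Q
  obtain ⟨j, y, rfl⟩ := M.exists_eq_smul_base Q'
  by_contra hne
  obtain ⟨u, c, hc, h⟩ := C.separates i j x y (fun h => hne (Subtype.ext (by
    simpa [base, M.incl_smul_eq_map] using h)))
  have key : ∀ (i : κ) (x : A), (∃ p ∈ P i, p ≠ 1 ∧ u⁻¹ * (x * p * x⁻¹) * u ∈ c) ↔
      Sum.inr ((M.incl u)⁻¹ • M.incl x • base P G i) ∈ M.extend c := by
    intro i x
    rw [← map_inv, smul_smul, ← map_mul, inr_mem_extend]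
    simp [mul_assoc]
  rw [key, key] at h
  refine h ((hdet c hc).iff_of_forall fun e he => ?_)
  have := Set.ext_iff.1 hQ (M.incl u • e)
  simpa [hG _ e he, Set.mem_smul_set_iff_inv_smul_mem] using this

theorem exists_eq_sep_inr_mem [Finite κ] (hE : IsTreeSet E) (hG : ∀ g : G, ∀ e ∈ E, g • e ∈ E)
    (hst : ∀ e ∈ E, {g : G | g • e = e}.Finite)
    (hdet : ∀ c ∈ C.cuts, Determines E (M.extend c))
    (htf : ∀ i, ∀ a ∈ P i, ∀ k : ℕ, 0 < k → a ^ k = 1 → a = 1)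
    (ho : IsOrientation E o) {a : A} (ha : a ≠ 1) (hao : M.incl a • o = o) :
    ∃ Q : conjugates P G, a ∈ Q.1 ∧ o = {e ∈ E | Sum.inr Q ∈ e} := by
  have hzo : ∀ z : ℤ, M.incl a ^ z • o = o := fun z =>
    (MulAction.stabilizer G o).zpow_mem (MulAction.mem_stabilizer_iff.2 hao) z
  have hinj : (∀ k : ℕ, 0 < k → a ^ k ≠ 1) → Function.Injective fun z : ℤ => M.incl a ^ z := by
    refine fun h => injective_zpow_of_pow_ne_one fun k hk hak => h k hk ?_
    rwa [← map_pow, map_eq_one_iff _ M.incl_injective] at hak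
  rcases C.conj_or_separates a ha with ⟨u, i, hu⟩ | ⟨u, c, hc, h⟩
  · have hau : a ∈ M.incl u • P i := by
      rw [M.incl_smul_eq_map]
      exact ⟨_, hu, by simp [mul_assoc]⟩
    refine ⟨M.incl u • base P G i, hau, ho.eq_of_subset (hE.isOrientation _) fun e he =>
      ⟨ho.subset he, ?_⟩⟩
    by_contra hQe
    have hQ : M.incl a • M.incl u • base P G i = M.incl u • base P G i := by
      refine Subtype.ext ?_
      change M.incl a • M.incl u • P i = M.incl u • P i
      rw [M.incl_smul_eq_map a]
      exact Subgroup.conj_smul_eq_self_of_mem hau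
    have hinj' := hinj fun k hk hak => ha (by
      have := htf i _ hu k hk (by
        have := conj_pow (a := u⁻¹) (b := a) (i := k)
        rw [inv_inv] at this
        rw [this, hak]
        simp)
      rwa [mul_eq_one_iff_eq_inv, inv_mul_eq_iff_eq_mul, mul_inv_cancel] at this)
    refine Set.infinite_univ ((finite_setOf_zpow_smul_mem hinj' (hst e (ho.subset he))
      (ho.finite (Sum.inr (M.incl u • base P G i)))).subset fun z _ => ⟨?_, ?_⟩)
    · rw [← hzo z]
      exact Set.smul_mem_smul_set he
    · rwa [Set.mem_smul_set_iff_inv_smul_mem, ← zpow_neg, Sum.smul_inr,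
        (MulAction.stabilizer G (M.incl u • base P G i)).zpow_mem hQ]
  · exfalso
    have hinj' := hinj fun k hk hak => by
      obtain ⟨k, rfl⟩ := Nat.exists_eq_succ_of_ne_zero hk.ne'
      refine h k k ?_
      rw [hak]
      simp
    obtain ⟨F, hFE, hF, hFc⟩ := hdet c hc
    set w : G ⊕ conjugates P G := Sum.inl (M.incl u * M.incl (M.proj 1)⁻¹) with hw
    have hgood : ∀ᶠ z : ℤ in Filter.cofinite, ∀ f ∈ F,
        (w ∈ M.incl a ^ z • M.incl u • f ↔ M.incl u • f ∈ o) := by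
      rw [Filter.eventually_all_finite hF]
      intro f hf
      have hfE := hG (M.incl u) f (hFE hf)
      refine (finite_setOf_zpow_smul_mem hinj' (hst _ hfE) ((ho.finite w).union
        ((ho.finite w).image compl))).subset fun z hz => ?_
      have hzE := hG (M.incl a ^ z) _ hfE
      have h1 : M.incl a ^ z • M.incl u • f ∈ o ↔ M.incl u • f ∈ o := by
        conv_lhs => rw [← hzo z]
        exact Set.smul_mem_smul_set_iff
      have h2 := ho.compl_mem_iff _ hzE
      rw [Set.mem_compl_iff, Set.mem_ofPred_eq, ← h1] at hz
      by_cases h3 : M.incl a ^ z • M.incl u • f ∈ o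
      · exact Or.inl ⟨h3, fun h4 => hz (iff_of_true h4 h3)⟩
      · refine Or.inr ⟨_, ⟨h2.2 h3, fun h4 => hz (iff_of_false h4 h3)⟩, compl_compl _⟩
    have hn : ∀ᶠ n : ℕ in Filter.cofinite, ∀ f ∈ F,
        (w ∈ M.incl a ^ (-(n + 1 : ℤ)) • M.incl u • f ↔ M.incl u • f ∈ o) :=
      (show Function.Injective fun n : ℕ => -(n + 1 : ℤ) from
        fun n m h => by simpa using h).tendsto_cofinite.eventually hgood
    have hm : ∀ᶠ n : ℕ in Filter.cofinite, ∀ f ∈ F,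
        (w ∈ M.incl a ^ (n + 1 : ℤ) • M.incl u • f ↔ M.incl u • f ∈ o) :=
      (show Function.Injective fun n : ℕ => (n + 1 : ℤ) from
        fun n m h => by simpa using h).tendsto_cofinite.eventually hgood
    obtain ⟨n, hn⟩ := hn.exists
    obtain ⟨m, hm⟩ := hm.exists
    have hproj : ∀ b : A, Sum.inl (M.incl (u⁻¹ * b * u) * M.incl (M.proj 1)⁻¹) ∈ M.extend c ↔
        u⁻¹ * b * u ∈ c := by
      intro b
      rw [inl_mem_extend, ← mul_one (M.incl (M.proj 1)⁻¹), M.proj_incl_mul, M.proj_incl_mul]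
      simp
    refine h n m ?_
    rw [← hproj, ← hproj]
    refine hFc _ _ fun f hf => Iff.trans ?_ ((hn f hf).trans ((hm f hf).symm.trans ?_))
    · simp [Set.mem_smul_set_iff_inv_smul_mem, hw, mul_assoc, -neg_add_rev]
      norm_cast
    · simp [Set.mem_smul_set_iff_inv_smul_mem, hw, mul_assoc]
      norm_cast

end Orientation

theorem exists_incl_mem_of_infinite {S : Set G} (hS : S.Infinite) :
    ∃ a ≠ 1, ∃ g ∈ S, M.incl a * g ∈ S := by
  obtain ⟨g, hg, h, hh, hne, heq⟩ := hS.exists_ne_map_eq_of_mapsTo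
    (fun g _ => Set.mem_range_self g) M.finite_reps
  refine ⟨M.proj h * (M.proj g)⁻¹, fun h1 => hne ?_, g, hg, ?_⟩
  · rw [mul_inv_eq_one] at h1
    simpa [h1] using heq
  · rwa [map_mul, map_inv, mul_assoc, heq, mul_inv_cancel_left]

/-- A peripheral extension acts on a tree with finite edge stabilizers, whose vertices with infinite
stabilizers correspond to the conjugates of the peripheral subgroups. -/
theorem exists_tree [Finite κ] [Group.FG G] [Countable G] (C : SeparatingCuts P)
    (htf : ∀ i, ∀ a ∈ P i, ∀ k : ℕ, 0 < k → a ^ k = 1 → a = 1) :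
    ∃ (W : Type) (T : SimpleGraph W) (ρ : G →* Equiv.Perm W),
      T.IsTree ∧ (∀ g u v, T.Adj (ρ g u) (ρ g v) ↔ T.Adj u v) ∧
      (∀ g u v, T.Adj u v → ¬(ρ g u = v ∧ ρ g v = u)) ∧
      (∃ s : Set W, s.Finite ∧ ∀ w, ∃ w' ∈ s, ∃ g, ρ g w' = w) ∧
      (∃ s : Set (W × W), s.Finite ∧ ∀ u v, T.Adj u v →
        ∃ p ∈ s, ∃ g, (ρ g p.1 = u ∧ ρ g p.2 = v) ∨ (ρ g p.1 = v ∧ ρ g p.2 = u)) ∧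
      (∀ u v, T.Adj u v → {g | ρ g u = u ∧ ρ g v = v}.Finite) ∧
      ∃ v : κ → W, (∀ g i j, ρ g (v i) = v j ↔ g • P i = P j) ∧
        (∀ a i, ρ (M.incl a) (v i) = v i → a ∈ P i) ∧
        ∀ w, (∀ g i, ρ g (v i) ≠ w) → {g | ρ g w = w}.Finite := by
  obtain ⟨S, hS, hSf⟩ := Group.fg_iff.1 ‹Group.FG G›
  obtain ⟨E, F, hE, hG, hF, hFE, hst, hdet⟩ := exists_isTreeSet (smul_conedCayley (P := P) (S := S))
    (boundaryConnected_conedCayley hS) finite_setOf_smul_eq_of_mem_conedCayley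
    (C.finite.image M.extend) (by
      rintro _ ⟨c, hc, rfl⟩
      exact M.finite_boundary_extend C hc hSf)
  replace hdet : ∀ c ∈ C.cuts, Determines E (M.extend c) := fun c hc => hdet _ ⟨c, hc, rfl⟩
  obtain ⟨W, T, ρ, h1, h2, h3, h4, h5, h6, vert, h7, h8⟩ := hE.exists_small_tree hG hF hFE hst
  have hinj := M.injective_sep_inr_mem hG hdet
  have hsmul : ∀ (g : G) (Q : conjugates P G),
      g • {e ∈ E | Sum.inr Q ∈ e} = {e ∈ E | Sum.inr (g • Q) ∈ e} := by
    intro g Q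
    ext e
    have : g⁻¹ • e ∈ E ↔ e ∈ E := ⟨fun h => by simpa using hG g _ h, hG _ _⟩
    simp [Set.mem_smul_set_iff_inv_smul_mem, this]
  refine ⟨W, T, ρ, h1, h2, h3, h4, h5, h6,
    fun i => vert _ (hE.isOrientation (Sum.inr (base P G i))), fun g i j => ?_, fun a i hai => ?_,
    fun w hw => ?_⟩
  · rw [h7, hsmul, hinj.eq_iff, Subtype.ext_iff]
    rfl
  · by_cases ha : a = 1
    · rw [ha]
      exact one_mem _
    · rw [h7] at hai
      obtain ⟨Q, haQ, hQ⟩ :=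
        M.exists_eq_sep_inr_mem hE hG hst hdet htf (hE.isOrientation _) ha hai
      rw [← hinj hQ] at haQ
      exact haQ
  · by_contra hinf
    obtain ⟨o, ho, rfl⟩ : ∃ o ho, vert o ho = w := by
      by_contra! h
      exact hinf (h8 w h)
    obtain ⟨a, ha, g, hg, hag⟩ := M.exists_incl_mem_of_infinite hinf
    have hao : M.incl a • o = o := by
      rw [← h7 _ _ _ ho ho]
      rwa [Set.mem_ofPred_eq, map_mul, Equiv.Perm.mul_apply, hg] at hag
    obtain ⟨Q, -, rfl⟩ := M.exists_eq_sep_inr_mem hE hG hst hdet htf ho ha hao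
    obtain ⟨i, x, rfl⟩ := M.exists_eq_smul_base Q
    exact hw (M.incl x) i ((h7 _ _ _ _ ho).2 (hsmul _ _))

end PeripheralExtension

section FreeFactor

open Monoid (CoprodI)

theorem IsFreeGroup.finite_generators (F : Type*) [Group F] [IsFreeGroup F] [Group.FG F] :
    Finite (IsFreeGroup.Generators F) := by
  obtain ⟨S, hS, hSf⟩ := Group.fg_iff.1 ‹Group.FG F›
  have := hSf.to_subtype
  have : Finite (F →* Multiplicative (ZMod 2)) :=
    Finite.of_injective (fun f (s : S) => f s) fun f g h =>
      MonoidHom.eq_of_eqOn_dense hS fun s hs => congrFun h ⟨s, hs⟩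
  have : Finite (IsFreeGroup.Generators F → Multiplicative (ZMod 2)) :=
    Finite.of_equiv _ IsFreeGroup.lift.symm
  by_contra h
  rw [not_finite_iff_infinite] at h
  exact (Function.infinite_of_left (π := Multiplicative (ZMod 2))).not_finite this

theorem IsFreeGroup.injective_of_zpow {F : Type*} [Group F] [IsFreeGroup F]
    (x : IsFreeGroup.Generators F) : Function.Injective fun z : ℤ => IsFreeGroup.of x ^ z := by
  intro z w h
  simpa [← ofAdd_zsmul] using
    congrArg (IsFreeGroup.lift fun _ : IsFreeGroup.Generators F => Multiplicative.ofAdd (1 : ℤ)) h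

theorem IsFreeGroup.nonempty_generators (F : Type*) [Group F] [IsFreeGroup F] [Nontrivial F] :
    Nonempty (IsFreeGroup.Generators F) := by
  by_contra h
  rw [not_nonempty_iff] at h
  obtain ⟨a, ha⟩ := exists_ne (1 : F)
  exact ha (DFunLike.congr_fun
    (IsFreeGroup.ext_hom (f := MonoidHom.id F) (g := 1) fun x => h.elim x) a)

variable {A κ : Type*} [Group A] {P : κ → Subgroup A} {B : Subgroup A}

/-- The subgroups `P i` and the cyclic subgroups generated by the elements of a basis of `B`. -/
noncomputable def splitBasis (P : κ → Subgroup A) (B : Subgroup A) [IsFreeGroup B] :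
    κ ⊕ IsFreeGroup.Generators B → Subgroup A :=
  Sum.elim P fun x => Subgroup.zpowers ((IsFreeGroup.of x : B) : A)

/-- A free factor in a free product decomposition may be replaced by the infinite cyclic groups
generated by the elements of a basis. -/
theorem bijective_lift_splitBasis [IsFreeGroup B]
    (h : Function.Bijective (CoprodI.lift fun o : Option κ => (o.elim B P).subtype)) :
    Function.Bijective (CoprodI.lift fun s => (splitBasis P B s).subtype) := by
  set L := splitBasis P B
  let f := MulEquiv.ofBijective _ h
  have hf : ∀ (o : Option κ) (a : A) (ha : a ∈ o.elim B P),
      f (CoprodI.of (M := fun o : Option κ => (o.elim B P : Subgroup A)) (i := o) ⟨a, ha⟩) = a := by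
    intro o a ha
    simp [f]
  let k : ∀ o : Option κ, (o.elim B P : Subgroup A) →* CoprodI fun s => L s := fun o =>
    match o with
    | none => IsFreeGroup.lift (G := B) fun x =>
        CoprodI.of (M := fun s => L s) (i := Sum.inr x) ⟨_, Subgroup.mem_zpowers _⟩
    | some i => CoprodI.of (M := fun s => L s) (i := Sum.inl i)
  let g : A →* CoprodI fun s => L s := (CoprodI.lift k).comp f.symm.toMonoidHom
  have hg : ∀ (o : Option κ) (a : A) (ha : a ∈ o.elim B P), g a = k o ⟨a, ha⟩ := by
    intro o a ha
    change CoprodI.lift k (f.symm a) = _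
    rw [(f.symm_apply_eq).2 (hf o a ha).symm, CoprodI.lift_of]
  have hgof : ∀ x, g ((IsFreeGroup.of x : B) : A) =
      CoprodI.of (M := fun s => L s) (i := Sum.inr x) ⟨_, Subgroup.mem_zpowers _⟩ := fun x => by
    rw [hg none _ (IsFreeGroup.of x : B).2]
    exact IsFreeGroup.lift_of _ x
  have hgP : ∀ i (a : A) (ha : a ∈ P i), g a = CoprodI.of (M := fun s => L s) (i := Sum.inl i)
      ⟨a, ha⟩ := fun i => hg (some i)
  let q : (CoprodI fun s => L s) →* A := CoprodI.lift fun s => (L s).subtype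
  have hq : ∀ s (a : A) (ha : a ∈ L s), q (CoprodI.of (M := fun s => L s) (i := s) ⟨a, ha⟩) = a :=
    fun s a ha => CoprodI.lift_of _ _
  have h1 : g.comp q = MonoidHom.id _ := by
    refine CoprodI.ext_hom _ _ ?_
    rintro (i | x) <;> ext ⟨a, ha⟩
    · simpa [hq] using hgP i a ha
    · refine (congrArg g (hq _ a ha)).trans ?_
      obtain ⟨z, rfl⟩ := id ha
      exact ((map_zpow g _ z).trans (congrArg (· ^ z) (hgof x))).trans
        (map_zpow (CoprodI.of (M := fun s => L s) (i := Sum.inr x)) _ z).symm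
  have h2 : (q.comp g).comp f.toMonoidHom = f.toMonoidHom := by
    refine CoprodI.ext_hom _ _ ?_
    rintro (_ | i)
    · refine IsFreeGroup.ext_hom (G := B) fun x => ?_
      have hx := hf none _ (IsFreeGroup.of x : B).2
      exact (congrArg (fun a => q (g a)) hx).trans
        (((congrArg q (hgof x)).trans (hq _ _ _)).trans hx.symm)
    · ext ⟨a, ha⟩
      have hx := hf (some i) a ha
      exact (congrArg (fun a => q (g a)) hx).trans
        (((congrArg q (hgP i a ha)).trans (hq _ _ _)).trans hx.symm)
  refine Function.bijective_iff_has_inverse.2 ⟨g, DFunLike.congr_fun h1, fun a => ?_⟩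
  obtain ⟨b, rfl⟩ := f.surjective a
  exact DFunLike.congr_fun h2 b

theorem fg_of_surjective_lift [Finite κ] (hP : ∀ i, Group.FG (P i))
    (h : Function.Surjective (CoprodI.lift fun i => (P i).subtype)) : Group.FG A := by
  rw [Group.fg_def, ← MonoidHom.range_eq_top.2 h, CoprodI.range_eq_iSup]
  refine Subgroup.FG.iSup _ fun i => ?_
  rw [Subgroup.range_subtype, ← Group.fg_iff_subgroup_fg]
  exact hP i

end FreeFactor

theorem Group.FG.countable (G : Type*) [Group G] [Group.FG G] : Countable G := by
  obtain ⟨α, _, f, hf⟩ := Monoid.fg_iff_exists_freeGroup_hom_surjective_finite.1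
    (inferInstance : Monoid.FG G)
  have : Countable (FreeMonoid α) := inferInstanceAs (Countable (List α))
  exact hf.countable

theorem PeripheralExtension.fg {A κ G : Type*} [Group A] {P : κ → Subgroup A} [Group G]
    [MulDistribMulAction G A] (M : PeripheralExtension P G) [Group.FG A] : Group.FG G := by
  obtain ⟨S, hS, hSf⟩ := Group.fg_iff.1 ‹Group.FG A›
  refine Group.fg_iff.2 ⟨M.incl '' S ∪ _, ?_, (hSf.image _).union M.finite_reps⟩
  refine eq_top_iff.2 fun g _ => ?_
  rw [Subgroup.closure_union, ← MonoidHom.map_closure, hS]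
  have := Subgroup.mul_mem_sup (Subgroup.mem_map_of_mem M.incl (Subgroup.mem_top (M.proj g)))
    (Subgroup.subset_closure (Set.mem_range_self (f := fun g => (M.incl (M.proj g))⁻¹ * g) g))
  simpa using this

/-- The preimage in `Aut(A)` of a finite group of outer automorphisms permuting the conjugacy
classes of the peripheral subgroups. -/
theorem PeripheralExtension.exists_of_finite {A κ : Type*} [Group A] (P : κ → Subgroup A)
    (hA : Function.Injective (MulAut.conj (G := A))) (R : Subgroup (OutG A)) [Finite R]
    {Abar : Subgroup (MulAut A)} (hAbar : Abar = R.comap (toOut A))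
    (hP : ∀ g ∈ Abar, ∀ i, ∃ j x, (P i).map g.toMonoidHom =
      (P j).map (MulAut.conj x).toMonoidHom) :
    ∃ M : PeripheralExtension P Abar, ∀ a, (M.incl a : MulAut A) = MulAut.conj a := by
  have hconj : ∀ a, toOut A (MulAut.conj a) = 1 := fun a =>
    (QuotientGroup.eq_one_iff _).2 ⟨a, rfl⟩
  have hmem : ∀ a, MulAut.conj a ∈ Abar := fun a => by
    rw [hAbar, Subgroup.mem_comap, hconj]
    exact one_mem R
  have hrep : ∀ g : MulAut A, ∃ a, MulAut.conj a = g * (toOut A g).out⁻¹ := fun g => by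
    refine (QuotientGroup.eq_one_iff (N := Inn A) _).1 ?_
    change toOut A (g * (toOut A g).out⁻¹) = 1
    rw [map_mul, map_inv, mul_inv_eq_one]
    exact (Quotient.out_eq _).symm
  choose p hp using hrep
  have hpr : ∀ g : MulAut A, (MulAut.conj (p g))⁻¹ * g = (toOut A g).out := fun g => by
    rw [hp, mul_inv_rev, inv_inv, inv_mul_cancel_right]
  refine ⟨{
    incl := MulAut.conj.codRestrict Abar hmem
    incl_injective := fun a b h => hA (congrArg Subtype.val h)
    incl_smul := fun a b => rfl
    proj := fun g => p g
    proj_incl_mul := fun a g => hA ?_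
    finite_reps := ?_
    exists_smul_eq := fun g i => hP g g.2 i }, fun a => rfl⟩
  · change MulAut.conj (p (MulAut.conj a * g)) = _
    rw [hp, map_mul, map_mul, hp, hconj, one_mul, mul_assoc]
  · refine ((Set.toFinite (R : Set (OutG A))).image fun q : OutG A => q.out).preimage
      Subtype.val_injective.injOn |>.subset ?_
    rintro _ ⟨g, rfl⟩
    exact ⟨toOut A g, hAbar.le g.2, (hpr g).symm⟩

/-- The relative Karrass–Pietrowski–Solitar theorem.  Given a free product
decomposition `A = A₁ ∗ ⋯ ∗ Aₙ ∗ B` preserved by a monomorphism `φ : H → Out(A)`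
from a finite group, with each `Aᵢ` finitely generated, nontrivial and
torsion-free and `B` a finitely generated free group, the extension `Ā`
(the preimage of `φ(H)` in `Aut(A)`) acts cocompactly and without inversions on
a tree with finite edge stabilisers, so that the minimal factors `A₁, …, A_m`
are realised (up to the induced extension by `Stab_H(i)`) as vertex stabilisers
of distinguished vertices, all other vertex stabilisers being finite. -/
theorem relative_KPS
    {A : Type*} [Group A] {n : ℕ} (Ai : Fin n → Subgroup A) (B : Subgroup A)
    -- `A = A₁ ∗ ⋯ ∗ Aₙ ∗ B` :
    (hiso : Function.Bijective
      (Monoid.CoprodI.lift (fun o : Option (Fin n) => (o.elim B Ai).subtype)))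
    -- at least two nontrivial factors :
    (hnontriv : ∃ o₁ o₂ : Option (Fin n), o₁ ≠ o₂ ∧
      o₁.elim B Ai ≠ ⊥ ∧ o₂.elim B Ai ≠ ⊥)
    -- each `Aᵢ` is finitely generated, nontrivial and torsion-free :
    (hfgA : ∀ i, Group.FG (Ai i)) (hAnontriv : ∀ i, Ai i ≠ ⊥)
    (htf : ∀ i, ∀ a ∈ Ai i, ∀ k : ℕ, 0 < k → a ^ k = 1 → a = 1)
    -- `B` is a (possibly trivial) finitely generated free group :
    (hfgB : Group.FG B) (hBfree : IsFreeGroup B)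
    -- `φ : H → Out(A)` a monomorphism with finite domain :
    {H : Type*} [Group H] [Finite H] (φ : H →* OutG A)
    (hφ : Function.Injective φ)
    -- the decomposition is preserved by `H`, with induced action `σ` on indices :
    (σ : H →* Equiv.Perm (Fin n))
    (hσ : ∀ (h : H) (i : Fin n), ∀ ψ : MulAut A, toOut A ψ = φ h →
      ∃ x : A, (Ai i).map ψ.toMonoidHom = (Ai (σ h i)).map (MulAut.conj x).toMonoidHom)
    -- `A₁, …, A_m` are the minimal factors :
    (m : ℕ) (hm : m ≤ n)
    (hmin : ∀ i : Fin n, (i : ℕ) < m ↔ ∀ h : H, (i : ℕ) ≤ ((σ h i : Fin n) : ℕ))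
    -- `Ā`, the preimage of `φ(H)` in `Aut(A)` :
    (Abar : Subgroup (MulAut A)) (hAbar : Abar = Subgroup.comap (toOut A) φ.range) :
    ∃ (W : Type) (T : SimpleGraph W) (ρ : Abar →* Equiv.Perm W),
      -- `T` is a tree and `Ā` acts on it by graph automorphisms
      T.IsTree ∧
      (∀ (g : Abar) (u v : W), T.Adj (ρ g u) (ρ g v) ↔ T.Adj u v) ∧
      -- without inversions
      (∀ (g : Abar) (u v : W), T.Adj u v → ¬(ρ g u = v ∧ ρ g v = u)) ∧
      -- finitely many orbits of vertices
      (∃ s : Set W, s.Finite ∧ ∀ w : W, ∃ w' ∈ s, ∃ g : Abar, ρ g w' = w) ∧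
      -- finitely many orbits of edges
      (∃ s : Set (W × W), s.Finite ∧ ∀ u v : W, T.Adj u v →
        ∃ p ∈ s, ∃ g : Abar, (ρ g p.1 = u ∧ ρ g p.2 = v) ∨ (ρ g p.1 = v ∧ ρ g p.2 = u)) ∧
      -- finite edge stabilisers
      (∀ u v : W, T.Adj u v → {g : Abar | ρ g u = u ∧ ρ g v = v}.Finite) ∧
      -- distinguished vertices `v₁, …, v_m`
      ∃ v : Fin m → W,
        -- lying in pairwise distinct `Ā`-orbits
        (∀ i j : Fin m, i ≠ j → ∀ g : Abar, ρ g (v i) ≠ v j) ∧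
        (∀ i : Fin m,
          -- `Stab_Ā(vᵢ)` contains `Aᵢ` (embedded via `A ≅ Inn(A)`) :
          (∀ g : Abar, (∃ a ∈ Ai (Fin.castLE hm i), (g : MulAut A) = MulAut.conj a) →
            ρ g (v i) = v i) ∧
          -- `Stab_Ā(vᵢ) ∩ A = Aᵢ` :
          (∀ (g : Abar) (a : A), (g : MulAut A) = MulAut.conj a →
            ρ g (v i) = v i → a ∈ Ai (Fin.castLE hm i)) ∧
          -- the image of `Stab_Ā(vᵢ)` in `H` is `Stab_H(i)` :
          ({h : H | σ h (Fin.castLE hm i) = Fin.castLE hm i} =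
            {h : H | ∃ g : Abar, ρ g (v i) = v i ∧ toOut A (g : MulAut A) = φ h})) ∧
        -- every vertex outside the orbits of the `vᵢ` has finite stabiliser
        (∀ w : W, (∀ (i : Fin m) (g : Abar), ρ g (v i) ≠ w) →
          {g : Abar | ρ g w = w}.Finite) := by
  have := hfgB
  have := hBfree
  have hof : ∀ x : IsFreeGroup.Generators B,
      Function.Injective fun z : ℤ => ((IsFreeGroup.of x : B) : A) ^ z := fun x z w h =>
    IsFreeGroup.injective_of_zpow x (Subtype.ext h)
  have := IsFreeGroup.finite_generators B
  obtain ⟨D⟩ := HeadData.nonempty_of_bijective _ (bijective_lift_splitBasis hiso)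
  obtain ⟨C⟩ := D.nonempty_separatingCuts hAnontriv _ hof fun _ => rfl
  have hsplit : ∀ o : Option (Fin n), o.elim B Ai ≠ ⊥ →
      ∃ s, splitBasis Ai B s ≠ ⊥ ∧ s.getLeft? = o := by
    rintro (_ | i) h
    · have := (Subgroup.nontrivial_iff_ne_bot B).2 h
      obtain ⟨x⟩ := IsFreeGroup.nonempty_generators B
      refine ⟨Sum.inr x, fun h' => ?_, rfl⟩
      have := Subgroup.zpowers_eq_bot.1 h'
      exact zero_ne_one (hof x (by simp [this]))
    · exact ⟨Sum.inl i, h, rfl⟩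
  obtain ⟨o₁, o₂, ho, h₁, h₂⟩ := hnontriv
  obtain ⟨s₁, hs₁, rfl⟩ := hsplit o₁ h₁
  obtain ⟨s₂, hs₂, rfl⟩ := hsplit o₂ h₂
  have hA : Function.Injective (MulAut.conj (G := A)) := by
    refine (injective_iff_map_eq_one _).2 fun a ha => ?_
    by_contra h
    obtain ⟨b, hb⟩ := D.exists_conj_ne (fun h => ho (congrArg _ h)) hs₁ hs₂ h
    exact hb (DFunLike.congr_fun ha b)
  have hinj : ∀ (i j : Fin n) (x : A), Ai i = (Ai j).map (MulAut.conj x).toMonoidHom → i = j :=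
    fun i j x h => Sum.inl_injective (D.eq_of_map_conj (hAnontriv j) h)
  have hlift : ∀ g : Abar, ∃ h, φ h = toOut A g := fun g => hAbar.le g.2
  have : Finite φ.range := Finite.of_surjective φ.rangeRestrict φ.rangeRestrict_surjective
  obtain ⟨M, hM⟩ := PeripheralExtension.exists_of_finite Ai hA φ.range hAbar fun g hg i => by
    obtain ⟨h, hh⟩ := hlift ⟨g, hg⟩
    exact ⟨_, hσ h i g hh.symm⟩
  have hσM : ∀ (g : Abar) (h : H) (i : Fin n), toOut A g = φ h →
      ∃ x, g • Ai i = M.incl x • Ai (σ h i) := fun g h i hg => by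
    obtain ⟨x, hx⟩ := hσ h i g hg
    exact ⟨x, hx.trans (M.incl_smul_eq_map x _).symm⟩
  have hσeq : ∀ (g : Abar) (h : H) (i j : Fin n), toOut A g = φ h → g • Ai i = Ai j →
      σ h i = j := fun g h i j hg hij => by
    obtain ⟨x, hx⟩ := hσM g h i hg
    exact (hinj _ _ x (hij.symm.trans (hx.trans (M.incl_smul_eq_map x _)))).symm
  have hincl : ∀ a, toOut A (M.incl a : Abar) = 1 := fun a => by
    rw [hM]
    exact (QuotientGroup.eq_one_iff _).2 ⟨a, rfl⟩
  have hexists : ∀ (h : H) (i : Fin n), ∃ g : Abar, toOut A g = φ h ∧ g • Ai i = Ai (σ h i) :=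
    fun h i => by
    obtain ⟨ψ, hψ⟩ := QuotientGroup.mk'_surjective (Inn A) (φ h)
    have hψA : ψ ∈ Abar := hAbar.ge ⟨h, hψ.symm⟩
    obtain ⟨x, hx⟩ := hσM ⟨ψ, hψA⟩ h i hψ
    refine ⟨(M.incl x)⁻¹ * ⟨ψ, hψA⟩, ?_, by rw [mul_smul, hx, inv_smul_smul]⟩
    rw [← map_inv, Subgroup.coe_mul, map_mul, hincl, one_mul]
    exact hψ
  have : ∀ o : Option (Fin n), Group.FG (o.elim B Ai : Subgroup A) := by
    rintro (_ | i)
    exacts [hfgB, hfgA i]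
  have := fg_of_surjective_lift this hiso.2
  have := M.fg
  have := Group.FG.countable Abar
  obtain ⟨W, T, ρ, hT, hadj, hninv, hvert, hedge, hfin, v, hv, hvA, hother⟩ :=
    M.exists_tree C htf
  refine ⟨W, T, ρ, hT, hadj, hninv, hvert, hedge, hfin, fun i => v (Fin.castLE hm i), ?_, ?_, ?_⟩
  · intro i j hij g hg
    obtain ⟨h, hh⟩ := hlift g
    have hσh := hσeq g h _ _ hh.symm ((hv _ _ _).1 hg)
    refine hij (Fin.ext (le_antisymm ?_ ?_))
    · simpa [hσh] using (hmin (Fin.castLE hm i)).1 i.2 h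
    · simpa [Equiv.Perm.inv_eq_iff_eq.2 hσh.symm] using (hmin (Fin.castLE hm j)).1 j.2 h⁻¹
  · refine fun i => ⟨?_, ?_, ?_⟩
    · rintro g ⟨a, ha, hg⟩
      obtain rfl : g = M.incl a := Subtype.ext (hg.trans (hM a).symm)
      rw [hv, M.incl_smul_eq_map]
      exact Subgroup.conj_smul_eq_self_of_mem ha
    · intro g a hg hgi
      obtain rfl : g = M.incl a := Subtype.ext (hg.trans (hM a).symm)
      exact hvA _ _ hgi
    · ext h
      constructor
      · intro hh
        obtain ⟨g, hg, hgi⟩ := hexists h (Fin.castLE hm i)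
        exact ⟨g, (hv _ _ _).2 (hgi.trans (congrArg Ai hh)), hg⟩
      · rintro ⟨g, hg, hgh⟩
        exact hσeq g h _ _ hgh ((hv _ _ _).1 hg)
  · refine fun w hw => hother w ?_
    rintro g j rfl
    obtain ⟨h, hh⟩ := Finite.exists_min fun h : H => ((σ h j : Fin n) : ℕ)
    obtain ⟨g', -, hg'⟩ := hexists h j
    have hlt : ((σ h j : Fin n) : ℕ) < m := (hmin _).2 fun k => by
      simpa using hh (k * h)
    refine hw ⟨_, hlt⟩ (g * g'⁻¹) ?_
    rw [map_mul, Equiv.Perm.mul_apply]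
    congr 1
    exact (hv _ _ _).2 (inv_smul_eq_iff.2 hg'.symm)
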